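/- arXiv:1711.02611 — 3 statements merged into one kernel-verified Lean document; each statement's English description precedes it below -/
import Mathlib

section
/- Let X be a Banach space and ρ : L¹[0,T] → X a bounded linear map. Then ‖ρ‖ = sup over 0 ≤ a < b ≤ T of ‖ρ(χ_{[a,b]})‖/(b − a), and moreover ‖ρ‖ = lim_{ε→0} sup over intervals [a,b] with 0 < b − a ≤ ε of ‖ρ(χ_{[a,b]})‖/(b − a). Consequently, if two bounded linear maps ρ, ρ' : L¹[0,T] → X satisfy ρ(χ_{[a,b]}) = ρ'(χ_{[a,b]}) + o(|b−a|) uniformly as b − a → 0, then ρ = ρ'. -/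
open MeasureTheory Set

/-- The indicator function of `[a,b]`, as an element of `L¹([0,T])`. -/
noncomputable def indL1 (T a b : ℝ) :
    Lp ℝ 1 (volume.restrict (Icc (0:ℝ) T)) :=
  indicatorConstLp 1 measurableSet_Icc
    (by
      have h1 : (volume.restrict (Icc (0:ℝ) T)) (Icc a b) ≤ volume (Icc a b) :=
        Measure.restrict_apply_le _ _
      have h2 : volume (Icc a b) < ⊤ := by
        simp [Real.volume_Icc]
      exact (lt_of_le_of_lt h1 h2).ne) (1 : ℝ)

/-!
Functions with disjoint supports have additive `L¹` norms, so by density of simple functions `‖ρ‖`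
is controlled by the values of `ρ` on multiples of indicators. The bound `‖ρ χ_s‖ ≤ C μ(s)` is
stable under disjoint unions and under limits for the distance `μ (s ∆ t)`; hence it passes from
short intervals to all intervals by bisection, from there to finite unions of intervals, and, since
those are dense among the measurable sets, to every measurable set.
-/

section Indicators

variable {α E X 𝕜 : Type*} [MeasurableSpace α] {μ : Measure α} [NormedAddCommGroup E]

lemma norm_toLp_add_toLp_of_disjoint_support {f g : α → E} (hf : MemLp f 1 μ) (hg : MemLp g 1 μ)
    (hfg : Disjoint (Function.support f) (Function.support g)) :
    ‖hf.toLp f + hg.toLp g‖ = ‖hf.toLp f‖ + ‖hg.toLp g‖ := by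
  have norm_add_apply (x : α) : ‖f x + g x‖ = ‖f x‖ + ‖g x‖ := by
    by_cases hx : f x = 0
    · simp [hx]
    · simp [Function.disjoint_support_iff.1 hfg hx]
  have hf' : Integrable f μ := memLp_one_iff_integrable.1 hf
  have hg' : Integrable g μ := memLp_one_iff_integrable.1 hg
  change ‖hf'.toL1 f + hg'.toL1 g‖ = ‖hf'.toL1 f‖ + ‖hg'.toL1 g‖
  rw [← Integrable.toL1_add]
  simp only [L1.norm_of_fun_eq_integral_norm, Pi.add_apply, norm_add_apply]
  exact integral_add hf'.norm hg'.norm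

lemma norm_indicatorConstLp_one {s : Set α} (hs : MeasurableSet s) (hμs : μ s ≠ ⊤) (c : E) :
    ‖indicatorConstLp 1 hs hμs c‖ = ‖c‖ * μ.real s := by
  simp [norm_indicatorConstLp]

lemma continuous_indicatorConstLp_measuredSets [IsFiniteMeasure μ] (c : E) :
    Continuous fun s : MeasuredSets μ ↦ indicatorConstLp 1 s.2 (measure_ne_top μ s.1) c :=
  continuous_indicatorConstLp_set ENNReal.one_ne_top fun _ ↦
    tendsto_iff_edist_tendsto_0.1 Filter.tendsto_id

variable [NontriviallyNormedField 𝕜] [NormedSpace 𝕜 E] [SeminormedAddCommGroup X]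
  [NormedSpace 𝕜 X] (ρ : Lp E 1 μ →L[𝕜] X) {C : ℝ}

lemma opNorm_le_of_norm_apply_indicatorConstLp_le (hC : 0 ≤ C)
    (h : ∀ (c : E) {s : Set α} (hs : MeasurableSet s) (hμs : μ s ≠ ⊤),
      ‖ρ (indicatorConstLp 1 hs hμs c)‖ ≤ C * (‖c‖ * μ.real s)) :
    ‖ρ‖ ≤ C := by
  refine ρ.opNorm_le_bound hC fun f ↦ ?_
  induction f using Lp.induction ENNReal.one_ne_top with
  | indicatorConst c hs hμs =>
    rw [Lp.simpleFunc.coe_indicatorConst, norm_indicatorConstLp_one]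
    exact h c hs hμs.ne
  | @add f g hf hg hfg ihf ihg =>
    rw [map_add, norm_toLp_add_toLp_of_disjoint_support hf hg hfg, mul_add]
    exact norm_add_le_of_le ihf ihg
  | isClosed => exact isClosed_le (by fun_prop) (by fun_prop)

variable [IsFiniteMeasure μ]

lemma norm_apply_indicatorConstLp_union_le {c : E} {s t : Set α} (hs : MeasurableSet s)
    (ht : MeasurableSet t) (hst : Disjoint s t)
    (hρs : ‖ρ (indicatorConstLp 1 hs (measure_ne_top μ s) c)‖ ≤ C * (‖c‖ * μ.real s))
    (hρt : ‖ρ (indicatorConstLp 1 ht (measure_ne_top μ t) c)‖ ≤ C * (‖c‖ * μ.real t)) :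
    ‖ρ (indicatorConstLp 1 (hs.union ht) (measure_ne_top μ (s ∪ t)) c)‖ ≤
      C * (‖c‖ * μ.real (s ∪ t)) := by
  rw [indicatorConstLp_disjoint_union hs ht (measure_ne_top μ s) (measure_ne_top μ t) hst, map_add,
    measureReal_union hst ht, mul_add, mul_add]
  exact norm_add_le_of_le hρs hρt

lemma norm_apply_indicatorConstLp_sUnion_le {c : E} {I : Finset (Set α)}
    (hI : ∀ s ∈ I, MeasurableSet s) (hdisj : (I : Set (Set α)).PairwiseDisjoint id)
    (h : ∀ s (hs : MeasurableSet s), s ∈ I →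
      ‖ρ (indicatorConstLp 1 hs (measure_ne_top μ s) c)‖ ≤ C * (‖c‖ * μ.real s))
    (hU : MeasurableSet (⋃₀ (I : Set (Set α)))) :
    ‖ρ (indicatorConstLp 1 hU (measure_ne_top μ _) c)‖ ≤
      C * (‖c‖ * μ.real (⋃₀ (I : Set (Set α)))) := by
  induction I using Finset.induction_on with
  | empty => simp
  | insert s I hsI ih =>
    rw [Finset.forall_mem_insert] at hI
    rw [Finset.coe_insert, pairwiseDisjoint_insert_of_notMem (by simpa using hsI)] at hdisj
    have hUI : MeasurableSet (⋃₀ (I : Set (Set α))) :=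
      MeasurableSet.sUnion I.countable_toSet hI.2
    have hsU : Disjoint s (⋃₀ (I : Set (Set α))) := disjoint_sUnion_right.2 hdisj.2
    simp only [Finset.coe_insert, sUnion_insert]
    exact norm_apply_indicatorConstLp_union_le ρ hI.1 hUI hsU
      (h s hI.1 (Finset.mem_insert_self s I))
      (ih hI.2 hdisj.1 (fun t ht htI ↦ h t ht (Finset.mem_insert_of_mem htI)) hUI)

theorem opNorm_le_of_isSetSemiring {𝓢 : Set (Set α)} (h𝓢 : IsSetSemiring 𝓢)
    (hcover : ∃ D : Set (Set α), D.Countable ∧ D ⊆ 𝓢 ∧ μ (⋃₀ D)ᶜ = 0)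
    (hgen : ‹MeasurableSpace α› = MeasurableSpace.generateFrom 𝓢) (hC : 0 ≤ C)
    (h : ∀ (c : E) s (hs : MeasurableSet s), s ∈ 𝓢 →
      ‖ρ (indicatorConstLp 1 hs (measure_ne_top μ s) c)‖ ≤ C * (‖c‖ * μ.real s)) :
    ‖ρ‖ ≤ C := by
  have measurableSet_of_mem {s : Set α} (hs : s ∈ 𝓢) : MeasurableSet s := by
    rw [hgen]
    exact MeasurableSpace.measurableSet_generateFrom hs
  refine opNorm_le_of_norm_apply_indicatorConstLp_le ρ hC fun c s hs _ ↦ ?_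
  have hclosed : IsClosed {t : MeasuredSets μ |
      ‖ρ (indicatorConstLp 1 t.2 (measure_ne_top μ t.1) c)‖ ≤ C * (‖c‖ * μ.real t)} :=
    isClosed_le (ρ.continuous.comp (continuous_indicatorConstLp_measuredSets c)).norm
      ((MeasuredSets.lipschitzWith_measureReal.continuous.const_mul _).const_mul _)
  refine hclosed.closure_subset_iff.2 ?_
    (dense_of_generateFrom_isSetSemiring h𝓢 hcover hgen ⟨s, hs⟩)
  rintro ⟨t, htm⟩ ht
  obtain ⟨I, hI, hdisj, rfl⟩ : ∃ I : Finset (Set α), ↑I ⊆ 𝓢 ∧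
      (I : Set (Set α)).PairwiseDisjoint id ∧ ⋃₀ (I : Set (Set α)) = t := by
    obtain ⟨P, hP⟩ := h𝓢.mem_supClosure_iff.1 ht
    exact ⟨P.parts, hP, P.disjoint, (Finset.sup_id_set_eq_sUnion _).symm.trans P.sup_parts⟩
  exact norm_apply_indicatorConstLp_sUnion_le ρ (fun s hs ↦ measurableSet_of_mem (hI hs)) hdisj
    (fun s hs hsI ↦ h c s hs (hI hsI)) htm

end Indicators

section Intervals

variable {E X 𝕜 : Type*} [NormedAddCommGroup E] [NontriviallyNormedField 𝕜] [NormedSpace 𝕜 E]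
  [SeminormedAddCommGroup X] [NormedSpace 𝕜 X] {μ : Measure ℝ} [IsFiniteMeasure μ]
  (ρ : Lp E 1 μ →L[𝕜] X) {C δ : ℝ}

lemma norm_apply_indicatorConstLp_Ioc_le_of_short {c : E} (hδ : 0 < δ)
    (h : ∀ a b : ℝ, a ≤ b → b - a ≤ δ →
      ‖ρ (indicatorConstLp 1 measurableSet_Ioc (measure_ne_top μ (Ioc a b)) c)‖ ≤
        C * (‖c‖ * μ.real (Ioc a b))) {a b : ℝ} (hab : a ≤ b) :
    ‖ρ (indicatorConstLp 1 measurableSet_Ioc (measure_ne_top μ (Ioc a b)) c)‖ ≤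
      C * (‖c‖ * μ.real (Ioc a b)) := by
  obtain ⟨n, hn⟩ : ∃ n : ℕ, b - a ≤ 2 ^ n * δ := by
    obtain ⟨n, hn⟩ := pow_unbounded_of_one_lt ((b - a) / δ) one_lt_two
    exact ⟨n, ((div_lt_iff₀ hδ).1 hn).le⟩
  induction n generalizing a b with
  | zero => exact h a b hab (by simpa using hn)
  | succ n ih =>
    obtain ⟨m, ham, hmb, hm⟩ : ∃ m, a ≤ m ∧ m ≤ b ∧ m - a = b - m :=
      ⟨(a + b) / 2, by linarith, by linarith, by ring⟩
    rw [pow_succ] at hn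
    simp only [← Ioc_union_Ioc_eq_Ioc ham hmb]
    exact norm_apply_indicatorConstLp_union_le ρ measurableSet_Ioc measurableSet_Ioc
      (Ioc_disjoint_Ioc_of_le le_rfl) (ih ham (by linarith)) (ih hmb (by linarith))

lemma iUnion_Ioc_neg_natCast (R : Type*) [Ring R] [LinearOrder R] [IsStrictOrderedRing R]
    [Archimedean R] : ⋃ n : ℕ, Ioc (-n : R) n = univ := by
  refine eq_univ_of_forall fun x ↦ ?_
  obtain ⟨n, hn⟩ := exists_nat_gt |x|
  exact mem_iUnion.2 ⟨n, (abs_lt.1 hn).1, (abs_lt.1 hn).2.le⟩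

theorem opNorm_le_of_norm_apply_indicatorConstLp_Ioc_le (hC : 0 ≤ C) (hδ : 0 < δ)
    (h : ∀ (c : E) (a b : ℝ), a ≤ b → b - a ≤ δ →
      ‖ρ (indicatorConstLp 1 measurableSet_Ioc (measure_ne_top μ (Ioc a b)) c)‖ ≤
        C * (‖c‖ * μ.real (Ioc a b))) :
    ‖ρ‖ ≤ C := by
  refine opNorm_le_of_isSetSemiring ρ IsSetSemiring.Ioc
    ⟨range fun n : ℕ ↦ Ioc (-n : ℝ) n, countable_range _, ?_, ?_⟩ ?_ hC ?_
  · rintro _ ⟨n, rfl⟩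
    exact ⟨-n, n, neg_le_self n.cast_nonneg, rfl⟩
  · rw [sUnion_range, iUnion_Ioc_neg_natCast, compl_univ, measure_empty]
  · simpa only [eq_comm (b := Ioc _ _)] using
      (BorelSpace.measurable_eq (α := ℝ)).trans (borel_eq_generateFrom_Ioc_le ℝ)
  · rintro c _ - ⟨a, b, hab, rfl⟩
    exact norm_apply_indicatorConstLp_Ioc_le_of_short ρ hδ (h c) hab

end Intervals

section IntervalIndicators

variable {T : ℝ}

lemma norm_indL1 {a b : ℝ} (ha : 0 ≤ a) (hb : b ≤ T) : ‖indL1 T a b‖ = max (b - a) 0 := by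
  rw [indL1, norm_indicatorConstLp_one, measureReal_restrict_apply measurableSet_Icc,
    inter_eq_left.2 (Icc_subset_Icc ha hb), Real.volume_real_Icc, norm_one, one_mul]

lemma indicatorConstLp_Ioc_eq_smul_indL1 (T a b c : ℝ) :
    indicatorConstLp 1 measurableSet_Ioc
      (measure_ne_top (volume.restrict (Icc (0 : ℝ) T)) (Ioc a b)) c =
      c • indL1 T (max a 0) (min b T) := by
  have hset : (Ioc a b : Set ℝ) =ᵐ[volume.restrict (Icc 0 T)] Icc (max a 0) (min b T) := by
    rw [← Icc_inter_Icc]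
    filter_upwards [ae_restrict_of_ae (Ioc_ae_eq_Icc (a := a) (b := b)),
      ae_restrict_mem measurableSet_Icc] with x hx hxT
    exact hx.trans (propext (and_iff_left hxT).symm)
  refine Lp.ext (indicatorConstLp_coeFn.trans ?_)
  grw [Lp.coeFn_smul, indL1, indicatorConstLp_coeFn, indicator_ae_eq_of_ae_eq_set hset]
  refine .of_forall fun x ↦ ?_
  by_cases hx : x ∈ Icc (max a 0) (min b T) <;> simp [hx]

variable {X : Type*} [SeminormedAddCommGroup X] [NormedSpace ℝ X]
  (ρ : Lp ℝ 1 (volume.restrict (Icc (0 : ℝ) T)) →L[ℝ] X)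

lemma opNorm_le_of_norm_indL1_le {C δ : ℝ} (hC : 0 ≤ C) (hδ : 0 < δ)
    (h : ∀ a b : ℝ, 0 ≤ a → a < b → b ≤ T → b - a ≤ δ → ‖ρ (indL1 T a b)‖ ≤ C * (b - a)) :
    ‖ρ‖ ≤ C := by
  refine opNorm_le_of_norm_apply_indicatorConstLp_Ioc_le ρ hC hδ fun c a b _ habδ ↦ ?_
  rw [← norm_indicatorConstLp_one measurableSet_Ioc (measure_ne_top _ _) c,
    indicatorConstLp_Ioc_eq_smul_indL1, map_smul, norm_smul, norm_smul, mul_left_comm]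
  refine mul_le_mul_of_nonneg_left ?_ (norm_nonneg c)
  have hnorm := norm_indL1 (T := T) (le_max_right a 0) (min_le_right b T)
  rcases lt_or_ge (max a 0) (min b T) with hlt | hge
  · rw [hnorm, max_eq_left (sub_nonneg.2 hlt.le)]
    exact h _ _ (le_max_right a 0) hlt (min_le_right b T)
      ((sub_le_sub (min_le_left b T) (le_max_left a 0)).trans habδ)
  · rw [max_eq_right (sub_nonpos.2 hge), norm_eq_zero] at hnorm
    simp [hnorm]

lemma isLUB_norm_indL1_div (hT : 0 < T) {ε : ℝ} (hε : 0 < ε) :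
    IsLUB {c : ℝ | ∃ a b : ℝ, 0 ≤ a ∧ a < b ∧ b ≤ T ∧ b - a ≤ ε ∧
      c = ‖ρ (indL1 T a b)‖ / (b - a)} ‖ρ‖ := by
  constructor
  · rintro _ ⟨a, b, ha, hab, hb, -, rfl⟩
    have hnorm : ‖indL1 T a b‖ = b - a := by
      rw [norm_indL1 ha hb, max_eq_left (sub_nonneg.2 hab.le)]
    exact hnorm ▸ ρ.ratio_le_opNorm (indL1 T a b)
  · intro M hM
    have norm_apply_div_le (a b : ℝ) (ha : 0 ≤ a) (hab : a < b) (hb : b ≤ T) (hbε : b - a ≤ ε) :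
        ‖ρ (indL1 T a b)‖ / (b - a) ≤ M := hM ⟨a, b, ha, hab, hb, hbε, rfl⟩
    have hM0 : 0 ≤ M := by
      have hmin : 0 < min T ε := lt_min hT hε
      refine le_trans ?_ (norm_apply_div_le 0 (min T ε) le_rfl hmin (min_le_left T ε) (by simp))
      positivity
    exact opNorm_le_of_norm_indL1_le ρ hM0 hε fun a b ha hab hb hbε ↦
      (div_le_iff₀ (sub_pos.2 hab)).1 (norm_apply_div_le a b ha hab hb hbε)

lemma sSup_norm_indL1_div (hT : 0 < T) {ε : ℝ} (hε : 0 < ε) :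
    sSup {c : ℝ | ∃ a b : ℝ, 0 ≤ a ∧ a < b ∧ b ≤ T ∧ b - a ≤ ε ∧
      c = ‖ρ (indL1 T a b)‖ / (b - a)} = ‖ρ‖ :=
  have hLUB := isLUB_norm_indL1_div ρ hT hε
  hLUB.csSup_eq hLUB.nonempty

end IntervalIndicators

theorem stmt3_general {X : Type*} [NormedAddCommGroup X] [NormedSpace ℝ X]
    (T : ℝ) (hT : 0 < T)
    (ρ ρ' : Lp ℝ 1 (volume.restrict (Icc (0 : ℝ) T)) →L[ℝ] X) :
    ‖ρ‖ = sSup {c : ℝ | ∃ a b : ℝ, 0 ≤ a ∧ a < b ∧ b ≤ T ∧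
        c = ‖ρ (indL1 T a b)‖ / (b - a)} ∧
    Filter.Tendsto
      (fun ε : ℝ => sSup {c : ℝ | ∃ a b : ℝ, 0 ≤ a ∧ a < b ∧ b ≤ T ∧ b - a ≤ ε ∧
          c = ‖ρ (indL1 T a b)‖ / (b - a)})
      (nhdsWithin 0 (Ioi 0)) (nhds ‖ρ‖) ∧
    ((∀ ε > (0 : ℝ), ∃ δ > (0 : ℝ), ∀ a b : ℝ, 0 ≤ a → a < b → b ≤ T → b - a ≤ δ →
        ‖ρ (indL1 T a b) - ρ' (indL1 T a b)‖ ≤ ε * (b - a)) → ρ = ρ') := by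
  refine ⟨?_, ?_, fun h ↦ ?_⟩
  · rw [← sSup_norm_indL1_div ρ hT hT]
    congr 1
    ext c
    exact ⟨fun ⟨a, b, ha, hab, hb, _, hc⟩ ↦ ⟨a, b, ha, hab, hb, hc⟩,
      fun ⟨a, b, ha, hab, hb, hc⟩ ↦ ⟨a, b, ha, hab, hb, by linarith, hc⟩⟩
  · refine tendsto_const_nhds.congr' ?_
    filter_upwards [self_mem_nhdsWithin] with ε hε
    exact (sSup_norm_indL1_div ρ hT hε).symm
  · rw [← sub_eq_zero, ← norm_le_zero_iff]
    refine le_of_forall_gt_imp_ge_of_dense fun ε hε ↦ ?_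
    obtain ⟨δ, hδ, hδε⟩ := h ε hε
    exact opNorm_le_of_norm_indL1_le (ρ - ρ') hε.le hδ hδε

/-- The norm of a bounded linear map `ρ : L¹[0,T] → X` equals the supremum of
`‖ρ(χ_{[a,b]})‖/(b-a)`, it is also the limit of such suprema over short intervals, and
consequently two such maps agreeing on short intervals up to `o(b-a)` are equal. -/
theorem stmt3 {X : Type*} [NormedAddCommGroup X] [NormedSpace ℝ X] [CompleteSpace X]
    (T : ℝ) (hT : 0 < T)
    (ρ ρ' : Lp ℝ 1 (volume.restrict (Icc (0:ℝ) T)) →L[ℝ] X) :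
    ‖ρ‖ = sSup {c : ℝ | ∃ a b : ℝ, 0 ≤ a ∧ a < b ∧ b ≤ T ∧
        c = ‖ρ (indL1 T a b)‖ / (b - a)} ∧
    Filter.Tendsto
      (fun ε : ℝ => sSup {c : ℝ | ∃ a b : ℝ, 0 ≤ a ∧ a < b ∧ b ≤ T ∧ b - a ≤ ε ∧
          c = ‖ρ (indL1 T a b)‖ / (b - a)})
      (nhdsWithin 0 (Ioi 0)) (nhds ‖ρ‖) ∧
    ((∀ ε > (0:ℝ), ∃ δ > (0:ℝ), ∀ a b : ℝ, 0 ≤ a → a < b → b ≤ T → b - a ≤ δ →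
        ‖ρ (indL1 T a b) - ρ' (indL1 T a b)‖ ≤ ε * (b - a)) → ρ = ρ') :=
  stmt3_general T hT ρ ρ'
end

section
/- Let π = Θ_m(π₁,…,π_m) be the non-crossing partition obtained by nesting π₁,…,π_m between consecutive elements of a new block of size m+1. Then for s ≤ t, α_π (t−s)^{|π|} = ∫_s^t ∏_{j=1}^m α_{π_j} (t−u)^{|π_j|} du, where |π| denotes the number of blocks of π and α_π is the order-polytope volume of the surrounding order of π. -/
open MeasureTheory

/-- `π` is a partition of `Fin k` (into nonempty blocks, every point in a unique block). -/
def IsPartitionOn {k : ℕ} (π : Finset (Finset (Fin k))) : Prop :=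
  (∀ B ∈ π, B.Nonempty) ∧ ∀ i : Fin k, ∃! B : Finset (Fin k), B ∈ π ∧ i ∈ B

/-- `i` and `j` lie in the same block of `π`. -/
def SameBlock {k : ℕ} (π : Finset (Finset (Fin k))) (i j : Fin k) : Prop :=
  ∃ B ∈ π, i ∈ B ∧ j ∈ B

/-- `π` is a non-crossing partition of `Fin k`. -/
def IsNC {k : ℕ} (π : Finset (Finset (Fin k))) : Prop :=
  IsPartitionOn π ∧ ∀ i₁ j₁ i₂ j₂ : Fin k, i₁ < j₁ → j₁ < i₂ → i₂ < j₂ →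
    SameBlock π i₁ i₂ → SameBlock π j₁ j₂ → SameBlock π i₁ j₁

/-- `B'` surrounds `B`. -/
def Surrounds {ι : Type*} [LinearOrder ι] (B' B : Finset ι) : Prop :=
  ∃ i ∈ B', ∃ j ∈ B', ∀ l ∈ B, i < l ∧ l < j

/-- The order-polytope volume `α_π` of the nesting order of `π`. -/
noncomputable def alphaNC {ι : Type*} [LinearOrder ι] (π : Finset (Finset ι)) : ℝ :=
  (volume {τ : ↥π → ℝ | (∀ B : ↥π, τ B ∈ Set.Icc (0:ℝ) 1) ∧
      ∀ B B' : ↥π, Surrounds (B' : Finset ι) (B : Finset ι) → τ B' < τ B}).toReal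

/-- The `j`-th nested component of `π` relative to the outer block enumerated by `e`:
the blocks of `π` other than `B` lying strictly between the `j`-th and `(j+1)`-st elements
of `B`. -/
noncomputable def nestSeg {K m : ℕ} (π : Finset (Finset (Fin K))) (B : Finset (Fin K))
    (e : Fin (m + 1) → Fin K) (j : Fin m) : Finset (Finset (Fin K)) := by
  classical
  exact π.filter (fun C => C ≠ B ∧ ∀ i ∈ C, e j.castSucc < i ∧ i < e j.succ)

/-!
Every block of `π` other than `B` lies in a gap of `B`, and surrounding never relates blocks in
different gaps, so the nesting order of `π` is the disjoint union of the nesting orders of the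
`π_j` with the least element `B` adjoined. By scaling, `α_π (t - s) ^ |π|` is the volume of the
order polytope of `π` in the cube `(s, t]^π`. Slicing this polytope at `τ B = u` leaves the product
over `j` of the order polytopes of the `π_j` in `(u, t]^π_j`, and Fubini's theorem gives the
integral.
-/

section CurryMeasure

variable {J : Type*} {κ : J → Type*} {X : ∀ j, κ j → Type*} [Fintype J] [∀ j, Fintype (κ j)]
  [∀ j k, MeasurableSpace (X j k)]

theorem pi_map_piCurry_symm (μ : ∀ j k, Measure (X j k)) [∀ j k, SigmaFinite (μ j k)] :
    (Measure.pi fun j => Measure.pi (μ j)).map (MeasurableEquiv.piCurry X).symm =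
      Measure.pi fun p : Σ j, κ j => μ p.1 p.2 := by
  refine (Measure.pi_eq fun s _ => ?_).symm
  have hpre : (MeasurableEquiv.piCurry X).symm ⁻¹' Set.univ.pi s =
      Set.univ.pi fun j => Set.univ.pi fun k => s ⟨j, k⟩ := by
    ext τ
    simp only [Set.mem_preimage, Set.mem_univ_pi, Sigma.forall]
    rfl
  rw [MeasurableEquiv.map_apply, hpre]
  simp only [Measure.pi_pi, Fintype.prod_sigma]

end CurryMeasure

section OrderPolytope

variable {ι ι' : Type*} {r : ι → ι → Prop} {r' : ι' → ι' → Prop} {a b : ℝ}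

/-- The order polytope of a relation `r` in the cube `(a, b]^ι`. The lower end is left open so that
slicing off the coordinate of a least element yields order polytopes again. -/
def orderPolytope (r : ι → ι → Prop) (a b : ℝ) : Set (ι → ℝ) :=
  {τ | (∀ i, τ i ∈ Set.Ioc a b) ∧ ∀ i j, r i j → τ i < τ j}

theorem measurableSet_orderPolytope [Countable ι] : MeasurableSet (orderPolytope r a b) := by
  simp only [orderPolytope, Set.mem_Ioc]
  measurability

theorem orderPolytope_anti_left : Antitone fun a => orderPolytope r a b :=
  fun _ _ h _ hτ => ⟨fun i => Set.Ioc_subset_Ioc_left h (hτ.1 i), hτ.2⟩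

theorem volume_orderPolytope_lt_top [Fintype ι] : volume (orderPolytope r a b) < ⊤ := by
  refine (measure_mono fun τ hτ => Set.mem_univ_pi.2 hτ.1).trans_lt
    (b := volume (Set.univ.pi fun _ : ι => Set.Ioc a b)) ?_
  simp [volume_pi_pi]

theorem orderPolytope_ae_eq_Icc [Fintype ι] :
    orderPolytope r a b =ᵐ[volume]
      {τ : ι → ℝ | (∀ i, τ i ∈ Set.Icc a b) ∧ ∀ i j, r i j → τ i < τ j} := by
  have hne : ∀ᵐ τ : ι → ℝ, ∀ i, τ i ≠ a :=
    ae_all_iff.2 fun i => Measure.ae_eval_ne (fun _ : ι => (volume : Measure ℝ)) i a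
  filter_upwards [hne] with τ hτ
  exact propext <| and_congr_left' <| forall_congr' fun i =>
    and_congr_left' (hτ i).symm.le_iff_lt.symm

theorem volume_orderPolytope_eq_of_relIso [Fintype ι] [Fintype ι'] (E : r ≃r r') :
    volume (orderPolytope r a b) = volume (orderPolytope r' a b) := by
  have hE := volume_measurePreserving_piCongrLeft (fun _ : ι' => ℝ) E.toEquiv
  have hpre : MeasurableEquiv.piCongrLeft (fun _ : ι' => ℝ) E.toEquiv ⁻¹' orderPolytope r' a b =
      orderPolytope r a b := by
    ext τ
    have happly (i : ι) : MeasurableEquiv.piCongrLeft (fun _ : ι' => ℝ) E.toEquiv τ (E i) = τ i :=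
      MeasurableEquiv.piCongrLeft_apply_apply ..
    simp only [orderPolytope, Set.mem_preimage, Set.mem_ofPred_eq, E.surjective.forall, happly,
      E.map_rel_iff]
  rw [← hpre, hE.measure_preimage_equiv]

theorem volume_orderPolytope_eq_pow_mul [Fintype ι] (r : ι → ι → Prop) (hab : a ≤ b) :
    volume (orderPolytope r a b) =
      ENNReal.ofReal (b - a) ^ Fintype.card ι * volume (orderPolytope r 0 1) := by
  rcases hab.eq_or_lt with rfl | hab
  · cases isEmpty_or_nonempty ι <;> simp [orderPolytope]
  have hc : 0 < b - a := sub_pos.2 hab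
  have hpre : orderPolytope r a b =
      (fun τ => τ + fun _ => -a) ⁻¹' (((b - a)⁻¹ • ·) ⁻¹' orderPolytope r 0 1) := by
    ext τ
    simp only [orderPolytope, Set.mem_ofPred_eq, Set.mem_preimage, Pi.smul_apply, Pi.add_apply,
      smul_eq_mul, Set.mem_Ioc, mul_pos_iff_of_pos_left (inv_pos.2 hc), inv_mul_le_iff₀ hc,
      mul_lt_mul_iff_right₀ (inv_pos.2 hc), mul_one, ← sub_eq_add_neg, sub_pos,
      sub_le_sub_iff_right, sub_lt_sub_iff_right]
  rw [hpre, measure_preimage_add_right, Measure.addHaar_preimage_smul _ (inv_pos.2 hc).ne',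
    Module.finrank_fintype_fun_eq_card, ← inv_pow, inv_inv, abs_of_pos (pow_pos hc _),
    ENNReal.ofReal_pow hc.le]

theorem mem_orderPolytope_optionLt {τ : Option ι → ℝ} :
    τ ∈ orderPolytope (Option.lt r) a b ↔
      τ none ∈ Set.Ioc a b ∧ (fun i => τ (some i)) ∈ orderPolytope r (τ none) b := by
  simp only [orderPolytope, Set.mem_ofPred_eq, Option.forall, Option.lt, Set.mem_Ioc]
  constructor
  · rintro ⟨⟨hnone, hsome⟩, ⟨-, hbot⟩, hr⟩
    exact ⟨hnone, fun i => ⟨hbot i trivial, (hsome i).2⟩, fun i => (hr i).2⟩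
  · rintro ⟨hnone, hsome, hr⟩
    exact ⟨⟨hnone, fun i => ⟨hnone.1.trans (hsome i).1, (hsome i).2⟩⟩,
      ⟨False.elim, fun i _ => (hsome i).1⟩, fun i => ⟨False.elim, hr i⟩⟩

theorem volume_orderPolytope_optionLt [Fintype ι] :
    volume (orderPolytope (Option.lt r) a b) =
      ∫⁻ u in Set.Ioc a b, volume (orderPolytope r u b) := by
  let e := (MeasurableEquiv.piOptionEquivProd fun _ : Option ι => ℝ).symm
  have he : MeasurePreserving e :=
    ⟨e.measurable, Measure.pi_map_piOptionEquivProd fun _ : Option ι => (volume : Measure ℝ)⟩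
  have hslice (u : ℝ) :
      volume ((fun σ : ι → ℝ => (σ, u)) ⁻¹' (e ⁻¹' orderPolytope (Option.lt r) a b)) =
        (Set.Ioc a b).indicator (fun u => volume (orderPolytope r u b)) u := by
    have hmem (σ : ι → ℝ) :
        e (σ, u) ∈ orderPolytope (Option.lt r) a b ↔ u ∈ Set.Ioc a b ∧ σ ∈ orderPolytope r u b :=
      mem_orderPolytope_optionLt
    by_cases hu : u ∈ Set.Ioc a b <;> simp [Set.preimage, hmem, hu]
  rw [← he.measure_preimage_equiv, Measure.volume_eq_prod,
    Measure.prod_apply_symm (e.measurable measurableSet_orderPolytope)]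
  simp only [hslice]
  rw [lintegral_indicator measurableSet_Ioc]

theorem volume_real_orderPolytope_optionLt [Fintype ι] (hab : a ≤ b) :
    volume.real (orderPolytope (Option.lt r) a b) =
      ∫ u in a..b, volume.real (orderPolytope r u b) := by
  have hanti : Antitone fun u => volume (orderPolytope r u b) :=
    fun _ _ h => measure_mono (orderPolytope_anti_left h)
  rw [intervalIntegral.integral_of_le hab, measureReal_def, volume_orderPolytope_optionLt]
  exact (integral_toReal hanti.measurable.aemeasurable
    (ae_of_all _ fun _ => volume_orderPolytope_lt_top)).symm

section Sigma

variable {J : Type*} {κ : J → Type*} {ρ : ∀ j, κ j → κ j → Prop}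

-- `Sigma.Lex emptyRelation ρ` is the disjoint union of the relations `ρ j`.
theorem mem_orderPolytope_sigmaLex {τ : (Σ j, κ j) → ℝ} :
    τ ∈ orderPolytope (Sigma.Lex emptyRelation ρ) a b ↔
      ∀ j, (fun k => τ ⟨j, k⟩) ∈ orderPolytope (ρ j) a b := by
  constructor
  · exact fun ⟨hmem, hlt⟩ j => ⟨fun k => hmem ⟨j, k⟩, fun k l h => hlt _ _ (.right k l h)⟩
  · refine fun h => ⟨fun p => (h p.1).1 p.2, ?_⟩
    rintro _ _ (⟨_, _, ⟨⟩⟩ | ⟨k, l, hkl⟩)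
    exact (h _).2 k l hkl

theorem volume_orderPolytope_sigmaLex [Fintype J] [∀ j, Fintype (κ j)] :
    volume (orderPolytope (Sigma.Lex emptyRelation ρ) a b) =
      ∏ j, volume (orderPolytope (ρ j) a b) := by
  let e := (MeasurableEquiv.piCurry fun (j : J) (_ : κ j) => ℝ).symm
  have he : MeasurePreserving e := ⟨e.measurable, pi_map_piCurry_symm fun _ _ => volume⟩
  have hpre : e ⁻¹' orderPolytope (Sigma.Lex emptyRelation ρ) a b =
      Set.univ.pi fun j => orderPolytope (ρ j) a b := by
    ext σ
    exact mem_orderPolytope_sigmaLex.trans Set.mem_univ_pi.symm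
  rw [← he.measure_preimage_equiv, hpre, volume_pi_pi]

theorem volume_real_orderPolytope_optionLt_sigmaLex [Fintype J] [∀ j, Fintype (κ j)]
    (hab : a ≤ b) :
    volume.real (orderPolytope (Option.lt (Sigma.Lex emptyRelation ρ)) a b) =
      ∫ u in a..b, ∏ j, volume.real (orderPolytope (ρ j) u b) := by
  simp only [volume_real_orderPolytope_optionLt hab, measureReal_def, volume_orderPolytope_sigmaLex,
    ENNReal.toReal_prod]

end Sigma

end OrderPolytope

section Surrounds

variable {ι : Type*} [LinearOrder ι] {A B C : Finset ι}

theorem Surrounds.irrefl (B : Finset ι) : ¬ Surrounds B B :=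
  fun ⟨i, hi, _, _, h⟩ => lt_irrefl i (h i hi).1

theorem Surrounds.trans (hAB : Surrounds A B) (hBC : Surrounds B C) : Surrounds A C := by
  obtain ⟨i, hi, j, hj, hB⟩ := hAB
  obtain ⟨i', hi', j', hj', hC⟩ := hBC
  exact ⟨i, hi, j, hj, fun l hl =>
    ⟨(hB i' hi').1.trans (hC l hl).1, (hC l hl).2.trans (hB j' hj').2⟩⟩

theorem Surrounds.asymm (h : Surrounds A B) : ¬ Surrounds B A :=
  fun h' => Surrounds.irrefl A (h.trans h')

theorem alphaNC_eq_volume_real_orderPolytope (π : Finset (Finset ι)) :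
    alphaNC π = volume.real (orderPolytope (Subrel Surrounds (· ∈ π)) 0 1) := by
  rw [measureReal_congr orderPolytope_ae_eq_Icc, alphaNC, measureReal_def]
  congr 2
  ext τ
  exact and_congr_right' forall_comm

theorem volume_real_orderPolytope_surrounds (π : Finset (Finset ι)) {a b : ℝ} (hab : a ≤ b) :
    volume.real (orderPolytope (Subrel Surrounds (· ∈ π)) a b) =
      alphaNC π * (b - a) ^ π.card := by
  rw [measureReal_def, volume_orderPolytope_eq_pow_mul _ hab, ENNReal.toReal_mul,
    ENNReal.toReal_pow, ENNReal.toReal_ofReal (sub_nonneg.2 hab), ← measureReal_def,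
    ← alphaNC_eq_volume_real_orderPolytope, Fintype.card_coe, mul_comm]

end Surrounds

section NestSeg

variable {K m : ℕ} {π : Finset (Finset (Fin K))} {B C D : Finset (Fin K)}
  {e : Fin (m + 1) → Fin K} {j j' : Fin m}

theorem mem_nestSeg :
    C ∈ nestSeg π B e j ↔ C ∈ π ∧ C ≠ B ∧ ∀ i ∈ C, e j.castSucc < i ∧ i < e j.succ := by
  simp [nestSeg]

theorem surrounds_of_mem_nestSeg (heB : ∀ l, e l ∈ B) (hC : C ∈ nestSeg π B e j) :
    Surrounds B C :=
  ⟨_, heB _, _, heB _, (mem_nestSeg.1 hC).2.2⟩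

theorem gap_unique {α : Type*} [Preorder α] {e : Fin (m + 1) → α} (he : Monotone e) {i : α}
    (h : e j.castSucc < i ∧ i < e j.succ) (h' : e j'.castSucc < i ∧ i < e j'.succ) : j = j' := by
  have hle : j ≤ j' := Fin.castSucc_lt_succ_iff.1 (he.reflect_lt (h.1.trans h'.2))
  have hge : j' ≤ j := Fin.castSucc_lt_succ_iff.1 (he.reflect_lt (h'.1.trans h.2))
  exact hle.antisymm hge

theorem nestSeg_index_unique (he : Monotone e) (hC : C.Nonempty) (h : C ∈ nestSeg π B e j)
    (h' : C ∈ nestSeg π B e j') : j = j' := by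
  obtain ⟨i, hi⟩ := hC
  exact gap_unique he ((mem_nestSeg.1 h).2.2 i hi) ((mem_nestSeg.1 h').2.2 i hi)

theorem Surrounds.nestSeg_index_eq (he : Monotone e) (hD : D.Nonempty) (h : Surrounds C D)
    (hCj : C ∈ nestSeg π B e j) (hDj : D ∈ nestSeg π B e j') : j = j' := by
  obtain ⟨i, hi, i', hi', hlt⟩ := h
  obtain ⟨l, hl⟩ := hD
  have hC := (mem_nestSeg.1 hCj).2.2
  exact gap_unique he ⟨(hC i hi).1.trans (hlt l hl).1, (hlt l hl).2.trans (hC i' hi').2⟩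
    ((mem_nestSeg.1 hDj).2.2 l hl)

/-- The blocks of a nested partition are the outer block and the blocks of its components. -/
noncomputable def nestSegEquiv (hne : ∀ C ∈ π, C.Nonempty) (hB : B ∈ π) (he : Monotone e)
    (hnest : ∀ C ∈ π, C ≠ B → ∃ j : Fin m, ∀ i ∈ C, e j.castSucc < i ∧ i < e j.succ) :
    Option (Σ j, {C // C ∈ nestSeg π B e j}) ≃ {C // C ∈ π} :=
  Equiv.ofBijective
    (fun o => o.elim ⟨B, hB⟩ fun p => ⟨p.2, (mem_nestSeg.1 p.2.2).1⟩) <| by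
    constructor
    · rintro (_ | ⟨j, C, hC⟩) (_ | ⟨j', C', hC'⟩) h
      · rfl
      · exact absurd (congrArg Subtype.val h).symm (mem_nestSeg.1 hC').2.1
      · exact absurd (congrArg Subtype.val h) (mem_nestSeg.1 hC).2.1
      · obtain rfl : C = C' := congrArg Subtype.val h
        obtain rfl := nestSeg_index_unique he (hne C (mem_nestSeg.1 hC).1) hC hC'
        rfl
    · rintro ⟨C, hC⟩
      by_cases hCB : C = B
      · exact ⟨none, Subtype.ext hCB.symm⟩
      · obtain ⟨j, hj⟩ := hnest C hC hCB
        exact ⟨some ⟨j, C, mem_nestSeg.2 ⟨hC, hCB, hj⟩⟩, rfl⟩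

/-- The nesting order of a nested partition is the disjoint union of the nesting orders of its
components, with the outer block adjoined as least element. -/
noncomputable def nestSegRelIso (hne : ∀ C ∈ π, C.Nonempty) (hB : B ∈ π) (he : Monotone e)
    (heB : ∀ l, e l ∈ B)
    (hnest : ∀ C ∈ π, C ≠ B → ∃ j : Fin m, ∀ i ∈ C, e j.castSucc < i ∧ i < e j.succ) :
    Option.lt (Sigma.Lex emptyRelation fun j => Subrel Surrounds (· ∈ nestSeg π B e j)) ≃r
      Subrel Surrounds (· ∈ π) where
  toEquiv := nestSegEquiv hne hB he hnest
  map_rel_iff' := by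
    rintro (_ | ⟨j, C, hC⟩) (_ | ⟨j', D, hD⟩)
    · exact iff_of_false (Surrounds.irrefl B) id
    · exact iff_of_true (surrounds_of_mem_nestSeg heB hD) trivial
    · exact iff_of_false (surrounds_of_mem_nestSeg heB hC).asymm id
    · constructor
      · intro (h : Surrounds C D)
        obtain rfl := h.nestSeg_index_eq he (hne D (mem_nestSeg.1 hD).1) hC hD
        exact Sigma.Lex.right _ _ h
      · rintro (⟨_, _, ⟨⟩⟩ | ⟨_, _, h⟩)
        exact h

end NestSeg

theorem stmt14_general {K m : ℕ} {π : Finset (Finset (Fin K))} (hne : ∀ C ∈ π, C.Nonempty)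
    {B : Finset (Fin K)} (hB : B ∈ π) {e : Fin (m + 1) → Fin K} (he : Monotone e)
    (heB : ∀ l, e l ∈ B)
    (hnest : ∀ C ∈ π, C ≠ B → ∃ j : Fin m, ∀ i ∈ C, e j.castSucc < i ∧ i < e j.succ)
    {s t : ℝ} (hst : s ≤ t) :
    alphaNC π * (t - s) ^ π.card =
      ∫ u in s..t, ∏ j : Fin m,
        alphaNC (nestSeg π B e j) * (t - u) ^ (nestSeg π B e j).card := by
  let r j := Subrel Surrounds (· ∈ nestSeg π B e j)
  calc
    alphaNC π * (t - s) ^ π.card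
      = volume.real (orderPolytope (Subrel Surrounds (· ∈ π)) s t) :=
        (volume_real_orderPolytope_surrounds π hst).symm
    _ = volume.real (orderPolytope (Option.lt (Sigma.Lex emptyRelation r)) s t) :=
        congrArg ENNReal.toReal
          (volume_orderPolytope_eq_of_relIso (nestSegRelIso hne hB he heB hnest)).symm
    _ = ∫ u in s..t, ∏ j, volume.real (orderPolytope (r j) u t) :=
        volume_real_orderPolytope_optionLt_sigmaLex hst
    _ = ∫ u in s..t, ∏ j, alphaNC (nestSeg π B e j) * (t - u) ^ (nestSeg π B e j).card := by
        refine intervalIntegral.integral_congr fun u hu => Finset.prod_congr rfl fun j _ => ?_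
        rw [Set.uIcc_of_le hst] at hu
        exact volume_real_orderPolytope_surrounds _ hu.2

/-- For a non-crossing partition `π = Θ_m(π₁, …, π_m)`, obtained by nesting `π₁, …, π_m`
into the gaps of an outer block `B` with increasing enumeration `e`, the order-polytope
volumes satisfy `α_π (t-s)^{|π|} = ∫_s^t ∏_j α_{π_j} (t-u)^{|π_j|} du`. -/
theorem stmt14 (K m : ℕ) (π : Finset (Finset (Fin K))) (hπ : IsNC π)
    (B : Finset (Fin K)) (hB : B ∈ π)
    (e : Fin (m + 1) → Fin K) (he : StrictMono e) (heB : B = Finset.image e Finset.univ)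
    (hnest : ∀ C ∈ π, C ≠ B → ∃ j : Fin m, ∀ i ∈ C, e j.castSucc < i ∧ i < e j.succ)
    (s t : ℝ) (hst : s ≤ t) :
    alphaNC π * (t - s) ^ π.card =
      ∫ u in s..t, ∏ j : Fin m, alphaNC (nestSeg π B e j) * (t - u) ^ (nestSeg π B e j).card := by
  exact stmt14_general hπ.1.1 hB he.monotone (by simp [heB]) hnest hst
end

section
/- The number of non-crossing partitions π of {1,…,k} all of whose blocks have size at least 2, weighted by α_π · C^{|π|} M^{k−2|π|} where α_π is the order-polytope volume of the nesting order, has generating function Σ_{k≥0} Σ_{π ∈ NC_{≥2}(k)} α_π C^{|π|} M^{k−2|π|} ζ^k = 1/(√((1/ζ − M)² − 2C) + M) · (1/ζ) for |ζ| < 1/(M + √(2C)); equivalently, with G̃(ζ) denoting the left-hand side, G̃(ζ) = ( √((ζ^{-1} − M)² − 2C) + M )^{-1} as formal/convergent power series. (This is the scalar identity (eq. for t−s = 1) of Theorem 4.3 of the paper.) -/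
open MeasureTheory

/-- The (finite) set of non-crossing partitions of `{1, …, k}` with no singleton blocks. -/
noncomputable def NCge2 (k : ℕ) : Finset (Finset (Finset (Fin k))) := by
  classical
  exact Finset.univ.filter (fun π => IsNC π ∧ ∀ B ∈ π, 2 ≤ B.card)

/-!
Almost surely a labeling has a unique largest label, and it sits on a block that surrounds no other.
In a non-crossing partition such a block is an interval; removing it and integrating out its label
gives a recursion for the volumes summed over the partitions with a given number of blocks. With `T`
in place of `C`, the recursion says that the generating series `G` satisfies `δ G = ζ² G` for the
derivation `δ = (1 - M ζ) ∂_T - ζ³ ∂_ζ`. Hence `δ` kills both `1 - M ζ G` and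
`G² ((1 - M ζ)² - 2 T ζ²)`. A series killed by `δ` is determined by its value at `T = 0`, where
`G = 1`, so `(1 - M ζ G)² = G² ((1 - M ζ)² - 2 T ζ²)`.

The recursion also bounds the volume sum over partitions of `k` points into `n` blocks by
`2 ^ n * k.choose (2 * n)`, so the coefficients of `G` at `T = C` are at most
`(√(2|C|) + |M|) ^ k`. On the disc of convergence the radicand stays in the slit plane, and by
connectedness `1 - M ζ G` is everywhere the square root that it is at `ζ = 0`.
-/

section OrderVolume

variable {ι κ : Type*}

/-- The labelings of `ι` by points of `(0, t)` that strictly increase along `r`. Leaving out the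
endpoints changes no volume and makes the set scale with `t`. -/
def increasingLabelings (r : ι → ι → Prop) (t : ℝ) : Set (ι → ℝ) :=
  {τ | (∀ i, τ i ∈ Set.Ioo 0 t) ∧ ∀ i j, r i j → τ i < τ j}

/-- The labelings in `increasingLabelings r 1` that are strictly largest at `b`. -/
def labelingsMaxAt (r : ι → ι → Prop) (b : ι) : Set (ι → ℝ) :=
  {τ | τ ∈ increasingLabelings r 1 ∧ ∀ j, j ≠ b → τ j < τ b}

lemma measurableSet_increasingLabelings [Finite ι] (r : ι → ι → Prop) (t : ℝ) :
    MeasurableSet (increasingLabelings r t) := by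
  simp only [increasingLabelings, Set.ofPred_and, Set.ofPred_forall]
  refine .inter (.iInter fun i => measurable_pi_apply i measurableSet_Ioo)
    (.iInter fun i => .iInter fun j => .iInter fun _ => ?_)
  exact measurableSet_lt (measurable_pi_apply i) (measurable_pi_apply j)

lemma measurableSet_labelingsMaxAt [Finite ι] (r : ι → ι → Prop) (b : ι) :
    MeasurableSet (labelingsMaxAt r b) := by
  simp only [labelingsMaxAt, Set.ofPred_and, Set.ofPred_forall]
  refine (measurableSet_increasingLabelings r 1).inter (.iInter fun j => .iInter fun _ => ?_)
  exact measurableSet_lt (measurable_pi_apply j) (measurable_pi_apply b)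

lemma increasingLabelings_eq_preimage_smul (r : ι → ι → Prop) {t : ℝ} (ht : 0 < t) :
    increasingLabelings r t = (fun τ => t⁻¹ • τ) ⁻¹' increasingLabelings r 1 := by
  ext τ
  have hIoo : ∀ x : ℝ, t⁻¹ * x ∈ Set.Ioo 0 1 ↔ x ∈ Set.Ioo 0 t := fun x => by
    rw [Set.mem_Ioo, Set.mem_Ioo, inv_mul_lt_iff₀ ht, mul_one,
      mul_pos_iff_of_pos_left (inv_pos.2 ht)]
  simp only [increasingLabelings, Set.mem_ofPred_eq, Set.mem_preimage, Pi.smul_apply, smul_eq_mul,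
    hIoo, mul_lt_mul_iff_right₀ (inv_pos.2 ht)]

lemma labelingsMaxAt_eq_empty {r : ι → ι → Prop} {b j : ι} (hbj : r b j) :
    labelingsMaxAt r b = ∅ := by
  refine Set.eq_empty_of_forall_notMem fun τ ⟨⟨_, hτ⟩, hmax⟩ => ?_
  rcases eq_or_ne j b with rfl | hj
  · exact lt_irrefl _ (hτ j j hbj)
  · exact lt_asymm (hτ b j hbj) (hmax j hj)

lemma mem_labelingsMaxAt_iff {r : ι → ι → Prop} {b : ι} (hb : ∀ j, ¬ r b j) {τ : ι → ℝ} :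
    τ ∈ labelingsMaxAt r b ↔ τ b ∈ Set.Ioo 0 1 ∧
      (fun i : {i // i ≠ b} => τ i) ∈ increasingLabelings (Subrel r (· ≠ b)) (τ b) := by
  constructor
  · rintro ⟨⟨hmem, hinc⟩, hmax⟩
    exact ⟨hmem b, fun i => ⟨(hmem i).1, hmax i i.2⟩, fun i j hij => hinc i j hij⟩
  · rintro ⟨hτb, hmem, hinc⟩
    refine ⟨⟨fun i => ?_, fun i j hij => ?_⟩, fun j hj => (hmem ⟨j, hj⟩).2⟩
    · rcases eq_or_ne i b with rfl | hi
      · exact hτb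
      · exact ⟨(hmem ⟨i, hi⟩).1, (hmem ⟨i, hi⟩).2.trans hτb.2⟩
    · have hi : i ≠ b := fun h => hb j (h ▸ hij)
      rcases eq_or_ne j b with rfl | hj
      · exact (hmem ⟨i, hi⟩).2
      · exact hinc ⟨i, hi⟩ ⟨j, hj⟩ hij

variable [Fintype ι] [Fintype κ]

/-- The volume of the order polytope of `r`. -/
noncomputable def orderVolume (r : ι → ι → Prop) : ℝ :=
  volume.real (increasingLabelings r 1)

lemma volume_increasingLabelings_ne_top (r : ι → ι → Prop) (t : ℝ) :
    volume (increasingLabelings r t) ≠ ⊤ := by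
  have hsub : increasingLabelings r t ⊆ Set.Icc (fun _ => 0) (fun _ => t) :=
    fun τ hτ => ⟨fun i => (hτ.1 i).1.le, fun i => (hτ.1 i).2.le⟩
  exact ((measure_mono hsub).trans_lt isCompact_Icc.measure_lt_top).ne

lemma volume_increasingLabelings (r : ι → ι → Prop) {t : ℝ} (ht : 0 < t) :
    volume (increasingLabelings r t) =
      ENNReal.ofReal (t ^ Fintype.card ι) * volume (increasingLabelings r 1) := by
  rw [increasingLabelings_eq_preimage_smul r ht,
    Measure.addHaar_preimage_smul _ (inv_ne_zero ht.ne')]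
  simp [abs_of_pos ht]

lemma ae_forall_ne_const (c : ℝ) : ∀ᵐ τ : ι → ℝ, ∀ i, τ i ≠ c :=
  ae_all_iff.2 fun i => Measure.ae_eval_ne (fun _ : ι => (volume : Measure ℝ)) i c

lemma ae_injective : ∀ᵐ τ : ι → ℝ, Function.Injective τ := by
  classical
  suffices ∀ i j : ι, i ≠ j → ∀ᵐ τ : ι → ℝ, τ i ≠ τ j by
    have hne : ∀ᵐ τ : ι → ℝ, ∀ i j, i ≠ j → τ i ≠ τ j :=
      ae_all_iff.2 fun i => ae_all_iff.2 fun j =>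
        Filter.eventually_imp_distrib_left.2 (this i j)
    exact hne.mono fun τ hτ i j => not_imp_not.1 (hτ i j)
  intro i j hij
  let V := LinearMap.ker (LinearMap.proj (R := ℝ) (φ := fun _ : ι => ℝ) i - LinearMap.proj j)
  have hV : V ≠ ⊤ := fun h => by
    have : Pi.single i (1 : ℝ) ∈ V := h ▸ Submodule.mem_top
    simp [V, hij] at this
  rw [ae_iff]
  convert Measure.addHaar_submodule volume V hV using 2
  ext τ
  simp [V, sub_eq_zero]

lemma orderVolume_congr {r : ι → ι → Prop} {s : κ → κ → Prop} (e : r ≃r s) :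
    orderVolume r = orderVolume s := by
  have hpre : increasingLabelings r 1 =
      MeasurableEquiv.piCongrLeft (fun _ : κ => ℝ) e.toEquiv ⁻¹' increasingLabelings s 1 := by
    ext τ
    have happly : ∀ i, MeasurableEquiv.piCongrLeft (fun _ : κ => ℝ) e.toEquiv τ (e i) = τ i :=
      Equiv.piCongrLeft_apply_apply (fun _ : κ => ℝ) e.toEquiv τ
    simp only [increasingLabelings, Set.mem_ofPred_eq, Set.mem_preimage,
      e.surjective.forall, happly, e.map_rel_iff]
  rw [orderVolume, hpre, measureReal_def,
    (volume_measurePreserving_piCongrLeft (fun _ : κ => ℝ) e.toEquiv).measure_preimage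
    (measurableSet_increasingLabelings s 1).nullMeasurableSet]
  rfl

lemma orderVolume_of_isEmpty [IsEmpty ι] (r : ι → ι → Prop) : orderVolume r = 1 := by
  have huniv : increasingLabelings r 1 = Set.univ := by
    ext τ
    simp [increasingLabelings]
  rw [orderVolume, huniv, measureReal_def, volume_pi, Measure.pi_of_empty]
  simp

lemma orderVolume_eq_volume_Icc (r : ι → ι → Prop) : orderVolume r =
    volume.real {τ : ι → ℝ | (∀ i, τ i ∈ Set.Icc 0 1) ∧ ∀ i j, r i j → τ i < τ j} := by
  refine measureReal_congr ?_
  filter_upwards [ae_forall_ne_const 0, ae_forall_ne_const 1] with τ h0 h1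
  refine propext (and_congr_left' (forall_congr' fun i => ?_))
  simp only [Set.mem_Ioo, Set.mem_Icc, lt_iff_le_and_ne, (h0 i).symm, h1 i, ne_eq,
    not_false_eq_true, and_true]

lemma orderVolume_eq_sum_labelingsMaxAt [Nonempty ι] (r : ι → ι → Prop) :
    orderVolume r = ∑ b, volume.real (labelingsMaxAt r b) := by
  have hunion : increasingLabelings r 1 =ᵐ[volume] ⋃ b, labelingsMaxAt r b := by
    filter_upwards [ae_injective] with τ hτ
    refine propext ⟨fun hmem => ?_, fun hmem => ?_⟩
    · obtain ⟨b, hb⟩ := Finite.exists_max τ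
      exact Set.mem_iUnion.2 ⟨b, hmem, fun j hj => (hb j).lt_of_ne (hτ.ne hj)⟩
    · obtain ⟨b, hb⟩ := Set.mem_iUnion.1 hmem
      exact hb.1
  have hdisj : Pairwise (Function.onFun Disjoint (labelingsMaxAt r)) := fun b c hbc =>
    Set.disjoint_left.2 fun τ hb hc => lt_asymm (hb.2 c hbc.symm) (hc.2 b hbc)
  have hfin : ∀ b, volume (labelingsMaxAt r b) ≠ ⊤ := fun b =>
    ne_top_of_le_ne_top (volume_increasingLabelings_ne_top r 1) (measure_mono fun τ hτ => hτ.1)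
  rw [orderVolume, measureReal_congr hunion,
    measureReal_iUnion_fintype hdisj (measurableSet_labelingsMaxAt r) hfin]

lemma lintegral_Ioo_zero_one_pow (n : ℕ) :
    ∫⁻ t in Set.Ioo (0 : ℝ) 1, ENNReal.ofReal (t ^ n) = ENNReal.ofReal ((n + 1 : ℝ)⁻¹) := by
  rw [← ofReal_integral_eq_lintegral_ofReal]
  · rw [← integral_Ioc_eq_integral_Ioo, ← intervalIntegral.integral_of_le zero_le_one, integral_pow]
    simp
  · exact ((continuous_pow n).continuousOn.integrableOn_Icc (a := 0) (b := 1)).mono_set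
      Set.Ioo_subset_Icc_self
  · filter_upwards [ae_restrict_mem measurableSet_Ioo] with t ht
    exact pow_nonneg ht.1.le n

variable [DecidableEq ι]

/-- The splitting of a labeling into its label at `b` and its other labels. -/
def labelingEquivProd (b : ι) : (ι → ℝ) ≃ᵐ ℝ × ({i // i ≠ b} → ℝ) :=
  (MeasurableEquiv.piEquivPiSubtypeProd (fun _ : ι => ℝ) (· = b)).trans
    ((MeasurableEquiv.funUnique {i // i = b} ℝ).prodCongr (MeasurableEquiv.refl _))

lemma measurePreserving_labelingEquivProd (b : ι) :
    MeasurePreserving (labelingEquivProd b) volume volume := by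
  refine (volume_preserving_piEquivPiSubtypeProd (fun _ : ι => ℝ) (· = b)).trans ?_
  convert! (volume_preserving_funUnique {i // i = b} ℝ).prod
    (MeasurePreserving.id (volume : Measure ({i // ¬ i = b} → ℝ)))
  rw [Measure.volume_eq_prod]
  congr!

lemma volume_labelingsMaxAt {r : ι → ι → Prop} {b : ι} (hb : ∀ j, ¬ r b j) :
    volume (labelingsMaxAt r b) = ENNReal.ofReal ((Fintype.card ι : ℝ)⁻¹) *
      volume (increasingLabelings (Subrel r (· ≠ b)) 1) := by
  set s := Subrel r (· ≠ b)
  set n := Fintype.card {i // i ≠ b}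
  have hcard : Fintype.card ι = n + 1 := by
    have := Fintype.card_pos_iff.2 ⟨b⟩
    simp only [n, Fintype.card_subtype_compl, Fintype.card_unique]
    omega
  let T : Set (ℝ × ({i // i ≠ b} → ℝ)) := {x | x.1 ∈ Set.Ioo 0 1 ∧ x.2 ∈ increasingLabelings s x.1}
  have hT : labelingsMaxAt r b = labelingEquivProd b ⁻¹' T :=
    Set.ext fun τ => mem_labelingsMaxAt_iff hb
  have hTmeas : MeasurableSet T := by
    rw [← MeasurableEquiv.measurableSet_preimage (labelingEquivProd b), ← hT]
    exact measurableSet_labelingsMaxAt r b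
  have hslice : ∀ t : ℝ, volume (Prod.mk t ⁻¹' T) = (Set.Ioo (0 : ℝ) 1).indicator
      (fun t => ENNReal.ofReal (t ^ n) * volume (increasingLabelings s 1)) t := fun t => by
    by_cases ht : t ∈ Set.Ioo (0 : ℝ) 1
    · rw [Set.indicator_of_mem ht, ← volume_increasingLabelings s ht.1]
      congr 1
      ext σ
      simp only [T, Set.mem_preimage, Set.mem_ofPred_eq, ht, true_and]
    · rw [Set.indicator_of_notMem ht, ← measure_empty (μ := (volume : Measure ({i // i ≠ b} → ℝ)))]
      congr 1
      ext σ
      simp only [T, Set.mem_preimage, Set.mem_ofPred_eq, ht, false_and, Set.mem_empty_iff_false]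
  calc volume (labelingsMaxAt r b) = ∫⁻ t, volume (Prod.mk t ⁻¹' T) := by
        rw [hT, (measurePreserving_labelingEquivProd b).measure_preimage hTmeas.nullMeasurableSet,
          Measure.volume_eq_prod, Measure.prod_apply hTmeas]
    _ = ENNReal.ofReal ((n + 1 : ℝ)⁻¹) * volume (increasingLabelings s 1) := by
        simp_rw [hslice]
        rw [lintegral_indicator measurableSet_Ioo, lintegral_mul_const _ (by fun_prop),
          lintegral_Ioo_zero_one_pow]
    _ = _ := by rw [hcard, Nat.cast_succ]

lemma card_mul_orderVolume [Nonempty ι] (r : ι → ι → Prop) [DecidablePred fun b => ∀ j, ¬ r b j] :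
    Fintype.card ι * orderVolume r =
      ∑ b with ∀ j, ¬ r b j, orderVolume (Subrel r (· ≠ b)) := by
  rw [orderVolume_eq_sum_labelingsMaxAt, Finset.mul_sum, Finset.sum_filter]
  refine Finset.sum_congr rfl fun b _ => ?_
  split_ifs with hb
  · rw [measureReal_def, volume_labelingsMaxAt hb, ENNReal.toReal_mul,
      ENNReal.toReal_ofReal (by positivity), mul_inv_cancel_left₀ (by positivity)]
    rfl
  · push Not at hb
    obtain ⟨j, hbj⟩ := hb
    simp [labelingsMaxAt_eq_empty hbj]

end OrderVolume

section AlphaNC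

variable {ι κ : Type*} [LinearOrder ι] [LinearOrder κ]

lemma alphaNC_eq_orderVolume (π : Finset (Finset ι)) :
    alphaNC π = orderVolume (Subrel Surrounds (· ∈ π)) := by
  rw [orderVolume_eq_volume_Icc, alphaNC, measureReal_def]
  congr 2
  ext τ
  exact and_congr_right' forall_comm

lemma alphaNC_empty : alphaNC (∅ : Finset (Finset ι)) = 1 := by
  rw [alphaNC_eq_orderVolume]
  exact orderVolume_of_isEmpty _

lemma alphaNC_nonneg (π : Finset (Finset ι)) : 0 ≤ alphaNC π :=
  ENNReal.toReal_nonneg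

lemma surrounds_map (e : ι ↪o κ) (B' B : Finset ι) :
    Surrounds (B'.map e.toEmbedding) (B.map e.toEmbedding) ↔ Surrounds B' B := by
  simp [Surrounds]

lemma alphaNC_map (e : ι ↪o κ) (π : Finset (Finset ι)) :
    alphaNC (π.map (Finset.mapEmbedding e.toEmbedding).toEmbedding) = alphaNC π := by
  rw [alphaNC_eq_orderVolume, alphaNC_eq_orderVolume]
  exact (orderVolume_congr
    ⟨π.equivMap _, fun {B' B} => surrounds_map e B'.1 B.1⟩).symm

open Classical in
lemma card_mul_alphaNC {π : Finset (Finset ι)} (hπ : π.Nonempty) :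
    π.card * alphaNC π = ∑ B ∈ π with ∀ B' ∈ π, ¬ Surrounds B B', alphaNC (π.erase B) := by
  have : Nonempty ↥π := hπ.to_subtype
  have herase (B : ↥π) :
      orderVolume (Subrel (Subrel Surrounds (· ∈ π)) (· ≠ B)) = alphaNC (π.erase B) := by
    rw [alphaNC_eq_orderVolume]
    let e : {D : ↥π // D ≠ B} ≃ ↥(π.erase B) :=
      (Equiv.subtypeSubtypeEquivSubtypeExists (· ∈ π) (· ≠ B)).trans
        (Equiv.subtypeEquivRight fun D => by simp [Subtype.ext_iff, and_comm])
    exact orderVolume_congr ⟨e, Iff.rfl⟩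
  have h := card_mul_orderVolume (Subrel Surrounds (· ∈ π))
  simp only [herase] at h
  rw [alphaNC_eq_orderVolume, ← Fintype.card_coe, h, Finset.sum_filter, Finset.sum_filter,
    ← Finset.sum_attach π, Finset.univ_eq_attach]
  simp only [Subtype.forall, subrel_val]

end AlphaNC

section FinInterval

variable {k p m p' m' : ℕ} {π : Finset (Finset (Fin k))} {B D : Finset (Fin k)} {i j x : Fin k}

lemma mem_NCge2 : π ∈ NCge2 k ↔ IsNC π ∧ ∀ B ∈ π, 2 ≤ B.card := by
  simp [NCge2]

lemma IsPartitionOn.eq_of_mem (h : IsPartitionOn π) (hB : B ∈ π) (hD : D ∈ π) (hiB : i ∈ B)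
    (hiD : i ∈ D) : B = D :=
  (h.2 i).unique ⟨hB, hiB⟩ ⟨hD, hiD⟩

lemma IsPartitionOn.sameBlock_iff (h : IsPartitionOn π) (hB : B ∈ π) (hi : i ∈ B) :
    SameBlock π i j ↔ j ∈ B := by
  refine ⟨fun ⟨D, hD, hiD, hjD⟩ => ?_, fun hj => ⟨B, hB, hi, hj⟩⟩
  rwa [h.eq_of_mem hB hD hi hiD]

lemma SameBlock.symm (h : SameBlock π i j) : SameBlock π j i :=
  let ⟨B, hB, hi, hj⟩ := h
  ⟨B, hB, hj, hi⟩

lemma IsNC.surrounds_of_mem_of_lt_of_lt (h : IsNC π) (hB : B ∈ π) (hD : D ∈ π) (hBD : B ≠ D)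
    (hi : i ∈ B) (hj : j ∈ B) (hx : x ∈ D) (hix : i < x) (hxj : x < j) : Surrounds B D := by
  have hdisj : ∀ y ∈ B, y ∉ D := fun y hyB hyD => hBD (h.1.eq_of_mem hB hD hyB hyD)
  refine ⟨i, hi, j, hj, fun l hl => ⟨?_, ?_⟩⟩
  · by_contra! hli
    have hli : l < i := hli.lt_of_ne fun e => hdisj i hi (e ▸ hl)
    have hcross := h.2 l i x j hli hix hxj ⟨D, hD, hl, hx⟩ ⟨B, hB, hi, hj⟩
    exact hdisj i hi ((h.1.sameBlock_iff hD hl).1 hcross)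
  · by_contra! hjl
    have hjl : j < l := hjl.lt_of_ne fun e => hdisj j hj (e ▸ hl)
    have hcross := h.2 i x j l hix hxj hjl ⟨B, hB, hi, hj⟩ ⟨D, hD, hx, hl⟩
    exact hdisj x ((h.1.sameBlock_iff hB hi).1 hcross) hx

/-- The `m` consecutive points of `Fin k` starting at `p`, cut off at `k`. -/
def finInterval (k p m : ℕ) : Finset (Fin k) :=
  {x | p ≤ (x : ℕ) ∧ (x : ℕ) < p + m}

lemma mem_finInterval : x ∈ finInterval k p m ↔ p ≤ (x : ℕ) ∧ (x : ℕ) < p + m := by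
  simp [finInterval]

lemma card_finInterval (h : p + m ≤ k) : (finInterval k p m).card = m := by
  have hmap : (finInterval k p m).map Fin.valEmbedding = Finset.Ico p (p + m) := by
    ext x
    simp only [Finset.mem_map, mem_finInterval, Fin.valEmbedding_apply, Finset.mem_Ico]
    exact ⟨fun ⟨_, hy, e⟩ => e ▸ hy, fun hx => ⟨⟨x, by omega⟩, hx, rfl⟩⟩
  rw [← Finset.card_map Fin.valEmbedding, hmap, Nat.card_Ico, Nat.add_sub_cancel_left]

lemma finInterval_injective (h : p + m ≤ k) (h' : p' + m' ≤ k) (hm : 0 < m)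
    (e : finInterval k p m = finInterval k p' m') : p = p' ∧ m = m' := by
  obtain rfl : m = m' := by rw [← card_finInterval h, e, card_finInterval h']
  have hp : (⟨p, by omega⟩ : Fin k) ∈ finInterval k p' m := by
    rw [← e, mem_finInterval]
    exact ⟨le_rfl, Nat.lt_add_of_pos_right hm⟩
  have hp' : (⟨p', by omega⟩ : Fin k) ∈ finInterval k p m := by
    rw [e, mem_finInterval]
    exact ⟨le_rfl, Nat.lt_add_of_pos_right hm⟩
  rw [mem_finInterval] at hp hp'
  exact ⟨le_antisymm hp'.1 hp.1, rfl⟩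

lemma mem_finInterval_of_lt_of_lt (hi : i ∈ finInterval k p m) (hj : j ∈ finInterval k p m)
    (hix : i < x) (hxj : x < j) : x ∈ finInterval k p m := by
  rw [mem_finInterval] at *
  rw [Fin.lt_def] at hix hxj
  omega

lemma exists_eq_finInterval_of_convex (hB : B.Nonempty)
    (hconv : ∀ i ∈ B, ∀ j ∈ B, ∀ x, i < x → x < j → x ∈ B) :
    ∃ p m, p + m ≤ k ∧ B = finInterval k p m := by
  have hmin := B.min'_mem hB
  have hmax := B.max'_mem hB
  have hle : (B.min' hB : ℕ) ≤ B.max' hB := B.min'_le _ hmax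
  refine ⟨B.min' hB, B.max' hB + 1 - B.min' hB, by omega, ?_⟩
  ext x
  have hiff : x ∈ finInterval k (B.min' hB) (B.max' hB + 1 - B.min' hB) ↔
      B.min' hB ≤ x ∧ x ≤ B.max' hB := by
    rw [mem_finInterval, Fin.le_def, Fin.le_def]
    omega
  rw [hiff]
  refine ⟨fun hx => ⟨B.min'_le x hx, B.le_max' x hx⟩, fun ⟨h1, h2⟩ => ?_⟩
  rcases h1.eq_or_lt with rfl | h1
  · exact hmin
  rcases h2.eq_or_lt with rfl | h2
  · exact hmax
  exact hconv _ hmin _ hmax x h1 h2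

lemma IsNC.exists_eq_finInterval (h : IsNC π) (hB : B ∈ π)
    (hin : ∀ B' ∈ π, ¬ Surrounds B B') : ∃ p m, p + m ≤ k ∧ B = finInterval k p m := by
  refine exists_eq_finInterval_of_convex (h.1.1 B hB) fun i hi j hj x hix hxj => ?_
  obtain ⟨D, ⟨hD, hxD⟩, -⟩ := h.1.2 x
  by_contra hxB
  have hBD : B ≠ D := fun e => hxB (e ▸ hxD)
  exact hin D hD (h.surrounds_of_mem_of_lt_of_lt hB hD hBD hi hj hxD hix hxj)

lemma IsPartitionOn.not_surrounds_finInterval (h : IsPartitionOn π)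
    (hI : finInterval k p m ∈ π) (hB : B ∈ π) : ¬ Surrounds (finInterval k p m) B := by
  rintro ⟨i, hi, j, hj, hij⟩
  obtain ⟨l, hl⟩ := h.1 B hB
  have hlI := mem_finInterval_of_lt_of_lt hi hj (hij l hl).1 (hij l hl).2
  have hIB := h.eq_of_mem hI hB hlI hl
  exact lt_irrefl i (hij i (hIB ▸ hi)).1

open Classical in
lemma sum_innermost {A : Type*} [AddCommMonoid A] (hπ : π ∈ NCge2 k) (f : Finset (Fin k) → A) :
    ∑ B ∈ π with ∀ B' ∈ π, ¬ Surrounds B B', f B =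
      ∑ a ∈ Finset.range (k - 1), ∑ p ∈ Finset.range (a + 1),
        if finInterval k p (k - a) ∈ π then f (finInterval k p (k - a)) else 0 := by
  obtain ⟨hnc, hcard⟩ := mem_NCge2.1 hπ
  rw [Finset.sum_sigma', ← Finset.sum_filter]
  symm
  refine Finset.sum_bij (fun y _ => finInterval k y.2 (k - y.1)) ?_ ?_ ?_ fun _ _ => rfl
  · simp only [Finset.mem_filter]
    exact fun y hy => ⟨hy.2, fun B' hB' => hnc.1.not_surrounds_finInterval hy.2 hB'⟩
  · rintro ⟨a, p⟩ hy ⟨a', p'⟩ hy' e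
    simp only [Finset.mem_filter, Finset.mem_sigma, Finset.mem_range] at hy hy' e
    obtain ⟨rfl, hm⟩ := finInterval_injective (by omega) (by omega) (by omega) e
    obtain rfl : a = a' := by omega
    rfl
  · intro B hB
    rw [Finset.mem_filter] at hB
    obtain ⟨p, m, hpm, rfl⟩ := hnc.exists_eq_finInterval hB.1 hB.2
    have hm : 2 ≤ m := card_finInterval hpm ▸ hcard _ hB.1
    have hkm : k - (k - m) = m := by omega
    refine ⟨⟨k - m, p⟩, ?_, by rw [hkm]⟩
    simp only [Finset.mem_filter, Finset.mem_sigma, Finset.mem_range, hkm]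
    exact ⟨⟨by omega, by omega⟩, hB.1⟩

lemma two_mul_card_le_of_mem_NCge2 (hπ : π ∈ NCge2 k) : 2 * π.card ≤ k := by
  obtain ⟨hnc, hcard⟩ := mem_NCge2.1 hπ
  have hdisj : (π : Set (Finset (Fin k))).PairwiseDisjoint id := fun B hB D hD hne =>
    Finset.disjoint_left.2 fun i hiB hiD => hne (hnc.1.eq_of_mem hB hD hiB hiD)
  calc 2 * π.card = ∑ B ∈ π, 2 := by rw [Finset.sum_const, smul_eq_mul, mul_comm]
    _ ≤ ∑ B ∈ π, (id B).card := Finset.sum_le_sum hcard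
    _ = (π.biUnion id).card := (Finset.card_biUnion hdisj).symm
    _ ≤ k := (Finset.card_le_univ _).trans_eq (Fintype.card_fin k)

end FinInterval

section InsertInterval

variable {a m p : ℕ} {π : Finset (Finset (Fin a))} {D : Finset (Fin a)} {i j : Fin a}
  {x y : Fin (a + m)}

/-- The increasing map `Fin a → Fin (a + m)` whose range omits the `m` points starting at `p`. -/
def finSkip (a m p : ℕ) : Fin a ↪o Fin (a + m) :=
  .ofStrictMono (fun i => ⟨if (i : ℕ) < p then i else i + m, by split_ifs <;> omega⟩)
    fun i j h => by
    rw [Fin.lt_def] at h ⊢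
    dsimp only
    split_ifs <;> omega

lemma coe_finSkip (i : Fin a) : (finSkip a m p i : ℕ) = if (i : ℕ) < p then (i : ℕ) else i + m :=
  rfl

lemma finSkip_notMem_finInterval (i : Fin a) : finSkip a m p i ∉ finInterval (a + m) p m := by
  rw [mem_finInterval, coe_finSkip]
  split_ifs <;> omega

lemma mem_finInterval_or_exists_finSkip_eq (hp : p ≤ a) (x : Fin (a + m)) :
    x ∈ finInterval (a + m) p m ∨ ∃ i, finSkip a m p i = x := by
  refine or_iff_not_imp_left.2 fun hx => ?_
  rw [mem_finInterval] at hx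
  refine ⟨⟨if (x : ℕ) < p then x else x - m, by split_ifs <;> omega⟩, Fin.ext ?_⟩
  rw [coe_finSkip]
  dsimp only
  split_ifs <;> omega

/-- The partition `π` with a new block of `m` consecutive points inserted at position `p`. -/
def insertInterval (m p : ℕ) (π : Finset (Finset (Fin a))) : Finset (Finset (Fin (a + m))) :=
  insert (finInterval (a + m) p m)
    (π.map (Finset.mapEmbedding (finSkip a m p).toEmbedding).toEmbedding)

lemma forall_mem_insertInterval {P : Finset (Fin (a + m)) → Prop} :
    (∀ B ∈ insertInterval m p π, P B) ↔
      P (finInterval (a + m) p m) ∧ ∀ D ∈ π, P (D.map (finSkip a m p).toEmbedding) := by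
  simp [insertInterval, Finset.mapEmbedding_apply]

lemma finInterval_mem_insertInterval : finInterval (a + m) p m ∈ insertInterval m p π :=
  Finset.mem_insert_self _ _

lemma map_finSkip_mem_insertInterval (hD : D ∈ π) :
    D.map (finSkip a m p).toEmbedding ∈ insertInterval m p π :=
  Finset.mem_insert_of_mem (Finset.mem_map_of_mem _ hD)

lemma finInterval_nonempty (hm : 0 < m) (hp : p ≤ a) : (finInterval (a + m) p m).Nonempty := by
  rwa [← Finset.card_pos, card_finInterval (by omega)]

lemma finInterval_notMem_map (hm : 0 < m) (hp : p ≤ a) : finInterval (a + m) p m ∉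
    π.map (Finset.mapEmbedding (finSkip a m p).toEmbedding).toEmbedding := by
  intro h
  obtain ⟨D, -, hD⟩ := Finset.mem_map.1 h
  obtain ⟨x, hx⟩ := finInterval_nonempty hm hp
  obtain ⟨i, -, rfl⟩ := Finset.mem_map.1 (hD ▸ hx :)
  exact finSkip_notMem_finInterval i hx

lemma erase_insertInterval (hm : 0 < m) (hp : p ≤ a) :
    (insertInterval m p π).erase (finInterval (a + m) p m) =
      π.map (Finset.mapEmbedding (finSkip a m p).toEmbedding).toEmbedding :=
  Finset.erase_insert (finInterval_notMem_map hm hp)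

lemma insertInterval_injective (hm : 0 < m) (hp : p ≤ a) :
    Function.Injective (insertInterval (a := a) m p) := fun π σ h => by
  have herase := congrArg (Finset.erase · (finInterval (a + m) p m)) h
  simp only [erase_insertInterval hm hp] at herase
  exact Finset.map_injective _ herase

lemma card_insertInterval (hm : 0 < m) (hp : p ≤ a) :
    (insertInterval m p π).card = π.card + 1 := by
  rw [insertInterval, Finset.card_insert_of_notMem (finInterval_notMem_map hm hp),
    Finset.card_map]

lemma mem_insertInterval_and_mem_iff {B : Finset (Fin (a + m))}
    (hx : x ∈ finInterval (a + m) p m) :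
    B ∈ insertInterval m p π ∧ x ∈ B ↔ B = finInterval (a + m) p m := by
  constructor
  · revert B
    simp only [and_imp, forall_mem_insertInterval, Finset.mem_map, implies_true, true_and]
    rintro D - ⟨i, -, rfl⟩
    exact (finSkip_notMem_finInterval i hx).elim
  · rintro rfl
    exact ⟨finInterval_mem_insertInterval, hx⟩

lemma mem_insertInterval_and_finSkip_mem_iff {B : Finset (Fin (a + m))} :
    B ∈ insertInterval m p π ∧ finSkip a m p i ∈ B ↔
      ∃ D, (D ∈ π ∧ i ∈ D) ∧ D.map (finSkip a m p).toEmbedding = B := by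
  constructor
  · revert B
    simp only [and_imp, forall_mem_insertInterval]
    exact ⟨fun hi => (finSkip_notMem_finInterval i hi).elim,
      fun D hD hi => ⟨D, ⟨hD, (Finset.mem_map' _).1 hi⟩, rfl⟩⟩
  · rintro ⟨D, ⟨hD, hi⟩, rfl⟩
    exact ⟨map_finSkip_mem_insertInterval hD, Finset.mem_map_of_mem _ hi⟩

lemma isPartitionOn_insertInterval_iff (hm : 0 < m) (hp : p ≤ a) :
    IsPartitionOn (insertInterval m p π) ↔ IsPartitionOn π := by
  refine and_congr ?_ ⟨fun h i => ?_, fun h x => ?_⟩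
  · simp [forall_mem_insertInterval, finInterval_nonempty hm hp]
  · obtain ⟨B, hB, huniq⟩ := h (finSkip a m p i)
    obtain ⟨D, hD, rfl⟩ := mem_insertInterval_and_finSkip_mem_iff.1 hB
    exact ⟨D, hD, fun E hE => Finset.map_injective _
      (huniq _ (mem_insertInterval_and_finSkip_mem_iff.2 ⟨E, hE, rfl⟩))⟩
  · rcases mem_finInterval_or_exists_finSkip_eq hp x with hx | ⟨i, rfl⟩
    · simp only [mem_insertInterval_and_mem_iff hx, existsUnique_eq]
    · obtain ⟨D, hD, huniq⟩ := h i
      refine ⟨_, mem_insertInterval_and_finSkip_mem_iff.2 ⟨D, hD, rfl⟩, fun B hB => ?_⟩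
      obtain ⟨E, hE, rfl⟩ := mem_insertInterval_and_finSkip_mem_iff.1 hB
      rw [huniq E hE]

lemma sameBlock_insertInterval_finSkip :
    SameBlock (insertInterval m p π) (finSkip a m p i) (finSkip a m p j) ↔ SameBlock π i j := by
  simp only [SameBlock, ← and_assoc, mem_insertInterval_and_finSkip_mem_iff]
  simp

lemma sameBlock_insertInterval_of_mem (hx : x ∈ finInterval (a + m) p m) :
    SameBlock (insertInterval m p π) x y ↔ y ∈ finInterval (a + m) p m := by
  simp only [SameBlock, ← and_assoc, mem_insertInterval_and_mem_iff hx, exists_eq_left]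

lemma isNC_insertInterval_iff (hm : 0 < m) (hp : p ≤ a) :
    IsNC (insertInterval m p π) ↔ IsNC π := by
  refine and_congr (isPartitionOn_insertInterval_iff hm hp) ⟨fun h i₁ j₁ i₂ j₂ => ?_,
    fun h i₁ j₁ i₂ j₂ h1 h2 h3 hi hj => ?_⟩
  · simpa only [OrderEmbedding.lt_iff_lt, sameBlock_insertInterval_finSkip]
      using h (finSkip a m p i₁) (finSkip a m p j₁) (finSkip a m p i₂) (finSkip a m p j₂)
  rcases mem_finInterval_or_exists_finSkip_eq hp i₁ with hi₁ | ⟨i₁, rfl⟩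
  · rw [sameBlock_insertInterval_of_mem hi₁] at hi ⊢
    exact mem_finInterval_of_lt_of_lt hi₁ hi h1 h2
  rcases mem_finInterval_or_exists_finSkip_eq hp i₂ with hi₂ | ⟨i₂, rfl⟩
  · exact (finSkip_notMem_finInterval i₁ ((sameBlock_insertInterval_of_mem hi₂).1 hi.symm)).elim
  rcases mem_finInterval_or_exists_finSkip_eq hp j₁ with hj₁ | ⟨j₁, rfl⟩
  · rw [sameBlock_insertInterval_of_mem hj₁] at hj
    exact (finSkip_notMem_finInterval i₂ (mem_finInterval_of_lt_of_lt hj₁ hj h2 h3)).elim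
  rcases mem_finInterval_or_exists_finSkip_eq hp j₂ with hj₂ | ⟨j₂, rfl⟩
  · exact (finSkip_notMem_finInterval j₁ ((sameBlock_insertInterval_of_mem hj₂).1 hj.symm)).elim
  rw [OrderEmbedding.lt_iff_lt] at h1 h2 h3
  rw [sameBlock_insertInterval_finSkip] at hi hj ⊢
  exact h i₁ j₁ i₂ j₂ h1 h2 h3 hi hj

lemma insertInterval_mem_NCge2_iff (hm : 2 ≤ m) (hp : p ≤ a) :
    insertInterval m p π ∈ NCge2 (a + m) ↔ π ∈ NCge2 a := by
  rw [mem_NCge2, mem_NCge2, isNC_insertInterval_iff (by omega) hp, forall_mem_insertInterval,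
    card_finInterval (by omega)]
  simp only [hm, true_and, Finset.card_map]

lemma IsPartitionOn.exists_insertInterval_eq {π : Finset (Finset (Fin (a + m)))} (hp : p ≤ a)
    (h : IsPartitionOn π) (hI : finInterval (a + m) p m ∈ π) : ∃ σ, insertInterval m p σ = π := by
  have hblock : ∀ B ∈ π, B ≠ finInterval (a + m) p m →
      B ⊆ Finset.univ.map (finSkip a m p).toEmbedding := fun B hB hBI x hx => by
    rcases mem_finInterval_or_exists_finSkip_eq hp x with hxI | ⟨i, rfl⟩
    · exact (hBI (h.eq_of_mem hB hI hx hxI)).elim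
    · exact Finset.mem_map_of_mem _ (Finset.mem_univ i)
  have hsub : π.erase (finInterval (a + m) p m) ⊆
      Finset.univ.map (Finset.mapEmbedding (finSkip a m p).toEmbedding).toEmbedding := by
    intro B hB
    obtain ⟨hBI, hB⟩ := Finset.mem_erase.1 hB
    obtain ⟨D, -, rfl⟩ := Finset.subset_map_iff.1 (hblock B hB hBI)
    exact Finset.mem_map_of_mem _ (Finset.mem_univ D)
  obtain ⟨σ, -, hσ⟩ := Finset.subset_map_iff.1 hsub
  exact ⟨σ, by rw [insertInterval, ← hσ, Finset.insert_erase hI]⟩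

end InsertInterval

section NCVolume

/-- The total order volume of the partitions in `NCge2 k` with `n` blocks. -/
noncomputable def ncVolume (k n : ℕ) : ℝ :=
  ∑ π ∈ NCge2 k with π.card = n, alphaNC π

lemma ncVolume_nonneg (k n : ℕ) : 0 ≤ ncVolume k n :=
  Finset.sum_nonneg fun π _ => alphaNC_nonneg π

lemma ncVolume_eq_zero {k n : ℕ} (h : k < 2 * n) : ncVolume k n = 0 := by
  rw [ncVolume, Finset.filter_false_of_mem, Finset.sum_empty]
  rintro π hπ rfl
  exact h.not_ge (two_mul_card_le_of_mem_NCge2 hπ)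

lemma ncVolume_zero (k : ℕ) : ncVolume k 0 = if k = 0 then 1 else 0 := by
  have hmem : ∅ ∈ NCge2 k ↔ k = 0 := by
    refine mem_NCge2.trans ⟨fun h => ?_, ?_⟩
    · by_contra hk
      obtain ⟨B, ⟨hB, -⟩, -⟩ := h.1.1.2 ⟨0, Nat.pos_of_ne_zero hk⟩
      exact Finset.notMem_empty B hB
    · rintro rfl
      exact ⟨⟨⟨by simp, fun i => i.elim0⟩, fun i => i.elim0⟩, by simp⟩
  simp only [ncVolume, Finset.card_eq_zero, Finset.filter_eq', hmem]
  split_ifs <;> simp [alphaNC_empty]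

open Classical in
lemma sum_alphaNC_erase_finInterval {a m p : ℕ} (n : ℕ) (hm : 2 ≤ m) (hp : p ≤ a) :
    ∑ π ∈ NCge2 (a + m) with π.card = n + 1, (if finInterval (a + m) p m ∈ π then
      alphaNC (π.erase (finInterval (a + m) p m)) else 0) = ncVolume a n := by
  have hm0 : 0 < m := by omega
  rw [← Finset.sum_filter, ncVolume]
  symm
  refine Finset.sum_bij (fun σ _ => insertInterval m p σ) (fun σ hσ => ?_)
    (fun σ _ σ' _ h => insertInterval_injective hm0 hp h) (fun π hπ => ?_) fun σ _ => ?_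
  · rw [Finset.mem_filter] at hσ
    rw [Finset.mem_filter, Finset.mem_filter, insertInterval_mem_NCge2_iff hm hp,
      card_insertInterval hm0 hp, hσ.2]
    exact ⟨⟨hσ.1, rfl⟩, finInterval_mem_insertInterval⟩
  · rw [Finset.mem_filter, Finset.mem_filter] at hπ
    obtain ⟨⟨hπ, hcard⟩, hI⟩ := hπ
    obtain ⟨σ, rfl⟩ := (mem_NCge2.1 hπ).1.1.exists_insertInterval_eq hp hI
    rw [insertInterval_mem_NCge2_iff hm hp] at hπ
    rw [card_insertInterval hm0 hp, Nat.add_right_cancel_iff] at hcard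
    exact ⟨σ, Finset.mem_filter.2 ⟨hπ, hcard⟩, rfl⟩
  · rw [erase_insertInterval hm0 hp, alphaNC_map]

lemma succ_mul_ncVolume_succ (k n : ℕ) : ((n : ℝ) + 1) * ncVolume k (n + 1) =
    ∑ a ∈ Finset.range (k - 1), ((a : ℝ) + 1) * ncVolume a n := by
  classical
  have hinnermost : ∀ π ∈ (NCge2 k).filter (·.card = n + 1), ((n : ℝ) + 1) * alphaNC π =
      ∑ a ∈ Finset.range (k - 1), ∑ p ∈ Finset.range (a + 1),
        if finInterval k p (k - a) ∈ π then alphaNC (π.erase (finInterval k p (k - a))) else 0 := by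
    intro π hπ
    obtain ⟨hπ, hcard⟩ := Finset.mem_filter.1 hπ
    have hne : π.Nonempty := Finset.card_pos.1 (by omega)
    rw [← sum_innermost hπ fun B => alphaNC (π.erase B), ← Nat.cast_add_one, ← hcard]
    convert card_mul_alphaNC hne
  rw [ncVolume, Finset.mul_sum, Finset.sum_congr rfl hinnermost, Finset.sum_comm]
  refine Finset.sum_congr rfl fun a ha => ?_
  obtain ⟨m, rfl⟩ : ∃ m, k = a + m := ⟨k - a, by grind⟩
  have hm : 2 ≤ m := by grind
  rw [Finset.sum_comm, Nat.add_sub_cancel_left, Finset.sum_congr rfl fun p hp =>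
    sum_alphaNC_erase_finInterval n hm (Finset.mem_range_succ_iff.1 hp), Finset.sum_const,
    Finset.card_range, nsmul_eq_mul, Nat.cast_succ]

lemma succ_mul_ncVolume_add_two (k n : ℕ) : ((n : ℝ) + 1) * ncVolume (k + 2) (n + 1) =
    (n + 1) * ncVolume (k + 1) (n + 1) + (k + 1) * ncVolume k n := by
  rw [succ_mul_ncVolume_succ, succ_mul_ncVolume_succ]
  exact Finset.sum_range_succ _ k

lemma sum_range_succ_mul_choose (k j : ℕ) :
    ∑ a ∈ Finset.range k, (a + 1) * a.choose j = (j + 1) * (k + 1).choose (j + 2) := by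
  induction k with
  | zero => simp [Nat.choose_eq_zero_of_lt]
  | succ k ih =>
    rw [Finset.sum_range_succ, ih, Nat.choose_succ_succ' (k + 1), Nat.add_one_mul_choose_eq]
    ring

lemma ncVolume_le (k n : ℕ) : ncVolume k n ≤ 2 ^ n * k.choose (2 * n) := by
  induction n generalizing k with
  | zero => rw [ncVolume_zero]; split_ifs <;> simp
  | succ n ih =>
    rcases k with _ | k
    · rw [ncVolume_eq_zero (by omega)]
      positivity
    refine le_of_mul_le_mul_left ?_ (n.cast_add_one_pos (α := ℝ))
    calc ((n : ℝ) + 1) * ncVolume (k + 1) (n + 1)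
      _ = ∑ a ∈ Finset.range k, ((a : ℝ) + 1) * ncVolume a n := succ_mul_ncVolume_succ (k + 1) n
      _ ≤ ∑ a ∈ Finset.range k, ((a : ℝ) + 1) * (2 ^ n * a.choose (2 * n)) := by
        gcongr with a
        exact ih a
      _ = 2 ^ n * ((∑ a ∈ Finset.range k, (a + 1) * a.choose (2 * n) : ℕ) : ℝ) := by
        push_cast
        rw [Finset.mul_sum]
        exact Finset.sum_congr rfl fun a _ => mul_left_comm _ _ _
      _ = 2 ^ n * ((2 * n + 1) * (k + 1).choose (2 * (n + 1))) := by
        rw [sum_range_succ_mul_choose]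
        push_cast
        rfl
      _ ≤ 2 ^ n * ((2 * n + 2) * (k + 1).choose (2 * (n + 1))) := by
        gcongr
        norm_num
      _ = (n + 1) * (2 ^ (n + 1) * (k + 1).choose (2 * (n + 1))) := by ring

end NCVolume

section TransportEquation

open PowerSeries

variable {R A : Type*} [CommRing R] [CommRing A] [Algebra R A] (d : Derivation R A A) (m : A)

/-- The derivation of a power series ring that applies `d` to each coefficient, used to
differentiate in a parameter of the coefficients. -/
noncomputable def coeffwiseDerivation : Derivation R A⟦X⟧ A⟦X⟧ :=
  Derivation.mk'
    { toFun := fun f => mk fun n => d (coeff n f)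
      map_add' := fun f g => by ext n; simp
      map_smul' := fun r f => by ext n; simp }
    fun f g => by
      ext n
      simp only [LinearMap.coe_mk, AddHom.coe_mk, coeff_mk, coeff_mul, map_add, map_sum,
        Derivation.leibniz, smul_eq_mul, Finset.sum_add_distrib, add_right_inj]
      exact Finset.Nat.sum_antidiagonal_swap (f := fun x => coeff x.1 g * d (coeff x.2 f))

lemma coeff_coeffwiseDerivation (f : A⟦X⟧) (n : ℕ) :
    coeff n (coeffwiseDerivation d f) = d (coeff n f) := by
  simp [coeffwiseDerivation]

lemma coeffwiseDerivation_C (a : A) : coeffwiseDerivation d (C a) = C (d a) := by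
  ext n
  rw [coeff_coeffwiseDerivation, coeff_C, coeff_C, apply_ite d, map_zero]

lemma coeffwiseDerivation_X : coeffwiseDerivation d X = 0 := by
  ext n
  rw [coeff_coeffwiseDerivation, coeff_X, apply_ite d, map_zero, Derivation.map_one_eq_zero,
    ite_self, map_zero]

/-- The derivation `(1 - m X) d - X³ d/dX` of a power series ring, where `d` acts on the
coefficients. With `d = d/dT` it encodes the recursion that removes the innermost blocks. -/
noncomputable def transportDerivation : Derivation R A⟦X⟧ A⟦X⟧ :=
  (1 - C m * X) • coeffwiseDerivation d - (X ^ 3 : A⟦X⟧) • (derivative A).restrictScalars R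

lemma transportDerivation_apply (f : A⟦X⟧) : transportDerivation d m f =
    (1 - C m * X) * coeffwiseDerivation d f - X ^ 3 * derivative A f :=
  rfl

lemma transportDerivation_X : transportDerivation d m X = -X ^ 3 := by
  rw [transportDerivation_apply, coeffwiseDerivation_X, derivative_X]
  ring

lemma transportDerivation_C (a : A) :
    transportDerivation d m (C a) = (1 - C m * X) * C (d a) := by
  rw [transportDerivation_apply, coeffwiseDerivation_C, derivative_C, mul_zero, sub_zero]

lemma coeff_zero_transportDerivation (f : A⟦X⟧) :
    coeff 0 (transportDerivation d m f) = d (coeff 0 f) := by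
  rw [transportDerivation_apply, ← coeff_coeffwiseDerivation]
  simp

lemma coeff_one_transportDerivation (f : A⟦X⟧) :
    coeff 1 (transportDerivation d m f) = d (coeff 1 f) - m * d (coeff 0 f) := by
  rw [transportDerivation_apply, sub_mul, one_mul, mul_assoc]
  simp [coeff_C_mul, coeff_succ_X_mul, coeff_coeffwiseDerivation, coeff_X_pow_mul',
    -coeff_zero_eq_constantCoeff]

lemma coeff_add_two_transportDerivation (f : A⟦X⟧) (k : ℕ) :
    coeff (k + 2) (transportDerivation d m f) =
      d (coeff (k + 2) f) - m * d (coeff (k + 1) f) - k * coeff k f := by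
  rw [transportDerivation_apply, sub_mul, one_mul, mul_assoc]
  rcases k with _ | k
  · simp [coeff_C_mul, coeff_succ_X_mul, coeff_coeffwiseDerivation, coeff_X_pow_mul']
  · simp [coeff_C_mul, coeff_succ_X_mul, coeff_coeffwiseDerivation, coeff_X_pow_mul',
      coeff_derivative, mul_comm]

lemma eq_zero_of_transportDerivation_eq_zero [IsAddTorsionFree R] (b : Polynomial R)
    {f : (Polynomial R)⟦X⟧} (hf : transportDerivation Polynomial.derivative' b f = 0)
    (hf0 : map Polynomial.constantCoeff f = 0) : f = 0 := by
  suffices ∀ n, coeff n f = 0 from ext this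
  have hconst : ∀ n, Polynomial.derivative (coeff n f) = 0 → coeff n f = 0 := fun n hn => by
    have h0 : (coeff n f).coeff 0 = 0 := by
      simpa using congrArg (coeff n) hf0
    rw [Polynomial.eq_C_of_derivative_eq_zero hn, h0, map_zero]
  intro n
  induction n using Nat.strong_induction_on with
  | _ n ih =>
    refine hconst n ?_
    have hn := congrArg (coeff n) hf
    match n with
    | 0 => simpa [coeff_zero_transportDerivation] using hn
    | 1 => simpa [coeff_one_transportDerivation, ih 0] using hn
    | n + 2 => simpa [coeff_add_two_transportDerivation, ih n, ih (n + 1)] using hn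

end TransportEquation

section NCSeries

open Polynomial PowerSeries

/-- The polynomial in `T` whose value at `C` is the weighted count
`Σ_{π ∈ NC_{≥2}(k)} α_π C^{|π|} M^{k-2|π|}`. -/
noncomputable def ncPolynomial (M : ℂ) (k : ℕ) : ℂ[X] :=
  ∑ π ∈ NCge2 k, monomial π.card (alphaNC π * M ^ (k - 2 * π.card))

lemma eval_ncPolynomial (C M : ℂ) (k : ℕ) : (ncPolynomial M k).eval C =
    ∑ π ∈ NCge2 k, alphaNC π * C ^ π.card * M ^ (k - 2 * π.card) := by
  simp only [ncPolynomial, eval_finsetSum, eval_monomial, mul_right_comm]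

lemma coeff_ncPolynomial (M : ℂ) (k n : ℕ) :
    (ncPolynomial M k).coeff n = ncVolume k n * M ^ (k - 2 * n) := by
  simp only [ncPolynomial, finsetSum_coeff, Polynomial.coeff_monomial, ncVolume]
  rw [← Finset.sum_filter, Complex.ofReal_sum, Finset.sum_mul]
  exact Finset.sum_congr rfl fun π hπ => by rw [(Finset.mem_filter.1 hπ).2]

lemma derivative_ncPolynomial_of_lt_two (M : ℂ) {k : ℕ} (hk : k < 2) :
    Polynomial.derivative (ncPolynomial M k) = 0 := by
  ext n
  rw [Polynomial.coeff_derivative, coeff_ncPolynomial, ncVolume_eq_zero (by omega)]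
  simp

lemma derivative_ncPolynomial_add_two (M : ℂ) (k : ℕ) :
    Polynomial.derivative (ncPolynomial M (k + 2)) =
      Polynomial.C M * Polynomial.derivative (ncPolynomial M (k + 1)) +
        (k + 1) * ncPolynomial M k := by
  ext n
  have hrec : ((n : ℂ) + 1) * ncVolume (k + 2) (n + 1) =
      (n + 1) * ncVolume (k + 1) (n + 1) + (k + 1) * ncVolume k n :=
    mod_cast succ_mul_ncVolume_add_two k n
  have hpow : (ncVolume (k + 1) (n + 1) : ℂ) * M ^ (k - 2 * n) =
      M * (ncVolume (k + 1) (n + 1) * M ^ (k + 1 - 2 * (n + 1))) := by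
    rcases lt_or_ge (k + 1) (2 * (n + 1)) with h | h
    · simp [ncVolume_eq_zero h]
    · rw [show k - 2 * n = k + 1 - 2 * (n + 1) + 1 by omega]
      ring
  rw [Polynomial.coeff_add, Polynomial.coeff_C_mul, ← Nat.cast_succ, ← Polynomial.C_eq_natCast,
    Polynomial.coeff_C_mul, Polynomial.coeff_derivative, Polynomial.coeff_derivative]
  simp only [coeff_ncPolynomial]
  rw [show k + 2 - 2 * (n + 1) = k - 2 * n by omega]
  push_cast
  linear_combination M ^ (k - 2 * n) * hrec + (n + 1) * hpow

/-- The formal generating series `Σ_k ncPolynomial M k ζ^k` of the weighted counts, with the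
variable `T` in the place of `C`. -/
noncomputable def ncSeries (M : ℂ) : ℂ[X]⟦X⟧ :=
  PowerSeries.mk (ncPolynomial M)

lemma transportDerivation_ncSeries (M : ℂ) :
    transportDerivation Polynomial.derivative' (Polynomial.C M) (ncSeries M) =
      PowerSeries.X ^ 2 * ncSeries M := by
  ext1 k
  match k with
  | 0 =>
    rw [coeff_zero_transportDerivation]
    simp [ncSeries, derivative_ncPolynomial_of_lt_two, PowerSeries.coeff_X_pow_mul']
  | 1 =>
    rw [coeff_one_transportDerivation]
    simp [ncSeries, derivative_ncPolynomial_of_lt_two, PowerSeries.coeff_X_pow_mul']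
  | k + 2 =>
    rw [coeff_add_two_transportDerivation, PowerSeries.coeff_X_pow_mul]
    simp only [ncSeries, PowerSeries.coeff_mk, derivative'_apply, derivative_ncPolynomial_add_two]
    ring

lemma map_constantCoeff_ncSeries (M : ℂ) :
    PowerSeries.map Polynomial.constantCoeff (ncSeries M) = 1 := by
  ext k
  rw [PowerSeries.coeff_map, ncSeries, PowerSeries.coeff_mk, Polynomial.constantCoeff_apply,
    coeff_ncPolynomial, ncVolume_zero, PowerSeries.coeff_one]
  split_ifs with hk <;> simp [hk]

/-- The expression `(1 - M ζ)² - 2 T ζ²` whose square root enters the closed form. -/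
noncomputable def ncRadicand (M : ℂ) : ℂ[X]⟦X⟧ :=
  (1 - PowerSeries.C (Polynomial.C M) * PowerSeries.X) ^ 2 -
    2 * PowerSeries.C Polynomial.X * PowerSeries.X ^ 2

lemma transportDerivation_C_mul_X_mul_ncSeries (M : ℂ) :
    transportDerivation Polynomial.derivative' (Polynomial.C M)
      (PowerSeries.C (Polynomial.C M) * PowerSeries.X * ncSeries M) = 0 := by
  simp only [Derivation.leibniz, smul_eq_mul, transportDerivation_ncSeries, transportDerivation_X,
    transportDerivation_C, derivative'_apply, Polynomial.derivative_C, map_zero]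
  ring

lemma transportDerivation_ncRadicand (M : ℂ) :
    transportDerivation Polynomial.derivative' (Polynomial.C M) (ncRadicand M) =
      -2 * PowerSeries.X ^ 2 * ncRadicand M := by
  have htwo : transportDerivation Polynomial.derivative' (Polynomial.C M) 2 = 0 :=
    Derivation.map_natCast _ 2
  simp only [ncRadicand, Derivation.leibniz, Derivation.leibniz_pow, map_sub, smul_eq_mul,
    transportDerivation_X, transportDerivation_C, htwo, derivative'_apply, Polynomial.derivative_C,
    Polynomial.derivative_X, Derivation.map_one_eq_zero, map_zero, map_one]
  ring

lemma transportDerivation_ncSeries_sq_mul_ncRadicand (M : ℂ) :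
    transportDerivation Polynomial.derivative' (Polynomial.C M)
      (ncSeries M ^ 2 * ncRadicand M) = 0 := by
  simp only [Derivation.leibniz, Derivation.leibniz_pow, smul_eq_mul, transportDerivation_ncSeries,
    transportDerivation_ncRadicand]
  ring

lemma one_sub_mul_ncSeries_sq (M : ℂ) :
    (1 - PowerSeries.C (Polynomial.C M) * PowerSeries.X * ncSeries M) ^ 2 =
      ncSeries M ^ 2 * ncRadicand M := by
  refine sub_eq_zero.1 (eq_zero_of_transportDerivation_eq_zero (Polynomial.C M) ?_ ?_)
  · rw [map_sub, transportDerivation_ncSeries_sq_mul_ncRadicand, Derivation.leibniz_pow, map_sub,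
      transportDerivation_C_mul_X_mul_ncSeries]
    simp
  · simp [ncRadicand, map_constantCoeff_ncSeries]

end NCSeries

section Evaluation

open PowerSeries

variable {R : Type*} [NormedCommRing R] {f g : R⟦X⟧} {z a b : R}

/-- The power series `f` converges absolutely at `z`, with sum `a`. -/
def AbsHasEval (f : R⟦X⟧) (z a : R) : Prop :=
  Summable (fun n => ‖coeff n f * z ^ n‖) ∧ HasSum (fun n => coeff n f * z ^ n) a

lemma AbsHasEval.unique (ha : AbsHasEval f z a) (hb : AbsHasEval f z b) : a = b :=
  ha.2.unique hb.2

lemma AbsHasEval.sub (hf : AbsHasEval f z a) (hg : AbsHasEval g z b) :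
    AbsHasEval (f - g) z (a - b) := by
  simp only [AbsHasEval, map_sub, sub_mul]
  exact ⟨(hf.1.add hg.1).of_nonneg_of_le (fun n => norm_nonneg _) fun n => norm_sub_le _ _,
    hf.2.sub hg.2⟩

lemma AbsHasEval.mul [CompleteSpace R] (hf : AbsHasEval f z a) (hg : AbsHasEval g z b) :
    AbsHasEval (f * g) z (a * b) := by
  have hcoeff : ∀ n, coeff n (f * g) * z ^ n = ∑ p ∈ Finset.HasAntidiagonal.antidiagonal n,
      coeff p.1 f * z ^ p.1 * (coeff p.2 g * z ^ p.2) := fun n => by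
    rw [coeff_mul, Finset.sum_mul]
    refine Finset.sum_congr rfl fun p hp => ?_
    rw [← Finset.HasAntidiagonal.mem_antidiagonal.1 hp, pow_add]
    ring
  have hnorm := summable_norm_sum_mul_antidiagonal_of_summable_norm hf.1 hg.1
  simp only [AbsHasEval, hcoeff]
  refine ⟨hnorm, ?_⟩
  rw [← hf.2.tsum_eq, ← hg.2.tsum_eq,
    tsum_mul_tsum_eq_tsum_sum_antidiagonal_of_summable_norm hf.1 hg.1]
  exact hnorm.of_norm.hasSum

lemma absHasEval_of_forall_ne {k : ℕ} (hf : ∀ n ≠ k, coeff n f = 0) (z : R) :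
    AbsHasEval f z (coeff k f * z ^ k) := by
  have hterm : ∀ n ≠ k, coeff n f * z ^ n = 0 := fun n hn => by rw [hf n hn, zero_mul]
  refine ⟨(hasSum_single k fun n hn => ?_).summable, hasSum_single k hterm⟩
  rw [hterm n hn, norm_zero]

lemma absHasEval_C (a z : R) : AbsHasEval (C a) z a := by
  convert absHasEval_of_forall_ne (f := C a) (k := 0) (fun n hn => ?_) z
  · simp
  · rw [coeff_C, if_neg hn]

lemma absHasEval_X (z : R) : AbsHasEval X z z := by
  convert absHasEval_of_forall_ne (f := (X : R⟦X⟧)) (k := 1) (fun n hn => ?_) z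
  · simp
  · rw [coeff_X, if_neg hn]

lemma AbsHasEval.pow [CompleteSpace R] (hf : AbsHasEval f z a) (n : ℕ) :
    AbsHasEval (f ^ n) z (a ^ n) := by
  induction n with
  | zero => simpa using absHasEval_C 1 z
  | succ n ih => simpa only [pow_succ] using ih.mul hf

end Evaluation

section Branch

lemma mul_mem_slitPlane_of_re_pos {a b : ℂ} (ha : 0 < a.re) (hb : 0 < b.re) :
    a * b ∈ Complex.slitPlane := by
  rw [Complex.mem_slitPlane_iff, Complex.mul_re, Complex.mul_im]
  by_contra! ⟨hre, him⟩
  have hpos : 0 < (a.re ^ 2 + a.im ^ 2) * b.re := by positivity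
  linarith [mul_nonpos_of_nonneg_of_nonpos ha.le hre, congrArg (a.im * ·) him]

lemma one_sub_sq_sub_mem_slitPlane {m c : ℂ} (h : √(2 * ‖c‖) + ‖m‖ < 1) :
    (1 - m) ^ 2 - 2 * c ∈ Complex.slitPlane := by
  obtain ⟨r, hr⟩ : ∃ r, r ^ 2 = 2 * c := IsAlgClosed.exists_pow_nat_eq _ two_pos
  have hnorm : ‖r‖ = √(2 * ‖c‖) := by
    rw [← Complex.norm_two, ← norm_mul, ← hr, norm_pow, Real.sqrt_sq (norm_nonneg r)]
  have hre : ∀ w : ℂ, ‖w‖ < 1 → 0 < (1 - w).re := fun w hw => by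
    rw [Complex.sub_re, Complex.one_re, sub_pos]
    exact (Complex.re_le_norm w).trans_lt hw
  have hadd : ‖m + r‖ < 1 := (norm_add_le m r).trans_lt (by linarith)
  have hsub : ‖m - r‖ < 1 := (norm_sub_le m r).trans_lt (by linarith)
  have hfactor : (1 - m) ^ 2 - 2 * c = (1 - (m + r)) * (1 - (m - r)) := by
    rw [← hr]
    ring
  rw [hfactor]
  exact mul_mem_slitPlane_of_re_pos (hre _ hadd) (hre _ hsub)

lemma complex_sqrt_sq (a : ℂ) : a.sqrt ^ 2 = a :=
  Complex.cpow_nat_inv_pow a two_ne_zero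

lemma complex_sqrt_ofReal {x : ℝ} (hx : 0 ≤ x) : (x : ℂ).sqrt = √x := by
  rw [Complex.sqrt_of_nonneg (Complex.zero_le_real.2 hx), Complex.ofReal_re]

end Branch

section GeneratingFunction

variable {C M z : ℂ}

open Finset in
lemma sum_range_choose_two_mul_le {x y : ℝ} (hx : 0 ≤ x) (hy : 0 ≤ y) (k : ℕ) :
    ∑ n ∈ range (k / 2 + 1), x ^ (2 * n) * y ^ (k - 2 * n) * k.choose (2 * n) ≤ (x + y) ^ k := by
  rw [add_pow, ← sum_image (f := fun j => x ^ j * y ^ (k - j) * k.choose j)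
    (g := fun n => 2 * n) fun a _ b _ hab => by simpa using hab]
  refine sum_le_sum_of_subset_of_nonneg (image_subset_iff.2 fun n hn => ?_) fun j _ _ => by
    positivity
  grind

lemma norm_eval_ncPolynomial_le (C M : ℂ) (k : ℕ) :
    ‖(ncPolynomial M k).eval C‖ ≤ (√(2 * ‖C‖) + ‖M‖) ^ k := by
  have hdeg : (ncPolynomial M k).natDegree < k / 2 + 1 := by
    refine Nat.lt_succ_of_le (Polynomial.natDegree_le_iff_coeff_eq_zero.2 fun n hn => ?_)
    rw [coeff_ncPolynomial, ncVolume_eq_zero (by omega), Complex.ofReal_zero, zero_mul]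
  have hsqrt : ∀ n, √(2 * ‖C‖) ^ (2 * n) = 2 ^ n * ‖C‖ ^ n := fun n => by
    rw [pow_mul, Real.sq_sqrt (by positivity), mul_pow]
  rw [Polynomial.eval_eq_sum_range' hdeg]
  refine (norm_sum_le _ _).trans
    (le_trans ?_ (sum_range_choose_two_mul_le (Real.sqrt_nonneg _) (norm_nonneg M) k))
  refine Finset.sum_le_sum fun n _ => ?_
  rw [coeff_ncPolynomial, norm_mul, norm_mul, norm_pow, norm_pow,
    Complex.norm_of_nonneg (ncVolume_nonneg k n), hsqrt]
  calc ncVolume k n * ‖M‖ ^ (k - 2 * n) * ‖C‖ ^ n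
    _ ≤ 2 ^ n * k.choose (2 * n) * ‖M‖ ^ (k - 2 * n) * ‖C‖ ^ n := by
      gcongr
      exact ncVolume_le k n
    _ = 2 ^ n * ‖C‖ ^ n * ‖M‖ ^ (k - 2 * n) * k.choose (2 * n) := by ring

/-- The sum at `z` of the generating function of the weighted counts. -/
noncomputable def ncGenFun (C M z : ℂ) : ℂ :=
  ∑' k, (ncPolynomial M k).eval C * z ^ k

lemma norm_eval_ncPolynomial_mul_pow_le (C M z : ℂ) (k : ℕ) :
    ‖(ncPolynomial M k).eval C * z ^ k‖ ≤ (‖z‖ * (√(2 * ‖C‖) + ‖M‖)) ^ k := by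
  rw [norm_mul, norm_pow, mul_pow, mul_comm]
  gcongr
  exact norm_eval_ncPolynomial_le C M k

lemma absHasEval_ncSeries (hz : ‖z‖ * (√(2 * ‖C‖) + ‖M‖) < 1) :
    AbsHasEval (PowerSeries.map (Polynomial.evalRingHom C) (ncSeries M)) z (ncGenFun C M z) := by
  have hsum : Summable fun k => ‖(ncPolynomial M k).eval C * z ^ k‖ :=
    (summable_geometric_of_lt_one (by positivity) hz).of_nonneg_of_le (fun k => norm_nonneg _)
      (norm_eval_ncPolynomial_mul_pow_le C M z)
  simpa [AbsHasEval, ncSeries, ncGenFun] using And.intro hsum hsum.of_norm.hasSum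

lemma continuousOn_ncGenFun {t : ℝ} (ht : 0 ≤ t) (h : t * (√(2 * ‖C‖) + ‖M‖) < 1) :
    ContinuousOn (ncGenFun C M) (Metric.closedBall 0 t) := by
  refine continuousOn_tsum (fun k => by fun_prop)
    (summable_geometric_of_lt_one (by positivity) h) fun k z hz => ?_
  refine (norm_eval_ncPolynomial_mul_pow_le C M z k).trans ?_
  gcongr
  exact mem_closedBall_zero_iff.1 hz

lemma ncGenFun_zero (C M : ℂ) : ncGenFun C M 0 = 1 := by
  have hq : ncPolynomial M 0 = 1 := by
    rw [Polynomial.eq_C_of_derivative_eq_zero (derivative_ncPolynomial_of_lt_two M two_pos),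
      coeff_ncPolynomial, ncVolume_zero]
    simp
  rw [ncGenFun, tsum_eq_single 0 fun k hk => by rw [zero_pow hk, mul_zero], hq]
  simp

lemma one_sub_mul_ncGenFun_sq (hz : ‖z‖ * (√(2 * ‖C‖) + ‖M‖) < 1) :
    (1 - M * z * ncGenFun C M z) ^ 2 =
      ncGenFun C M z ^ 2 * ((1 - M * z) ^ 2 - 2 * C * z ^ 2) := by
  set φ := PowerSeries.map (Polynomial.evalRingHom C) (ncSeries M) with hφ
  have hformal : (1 - PowerSeries.C M * PowerSeries.X * φ) ^ 2 =
      φ ^ 2 * ((1 - PowerSeries.C M * PowerSeries.X) ^ 2 -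
        PowerSeries.C (2 * C) * PowerSeries.X ^ 2) := by
    have htwo : PowerSeries.map (Polynomial.evalRingHom C) 2 = PowerSeries.C 2 :=
      (map_ofNat _ 2).trans (map_ofNat _ 2).symm
    have h := congrArg (PowerSeries.map (Polynomial.evalRingHom C)) (one_sub_mul_ncSeries_sq M)
    simpa [ncRadicand, ← hφ, htwo] using h
  have hG : AbsHasEval φ z (ncGenFun C M z) := absHasEval_ncSeries hz
  have hone : AbsHasEval (1 : PowerSeries ℂ) z 1 := by
    simpa only [map_one] using absHasEval_C (1 : ℂ) z
  have hMz := (absHasEval_C M z).mul (absHasEval_X z)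
  have hCz := (absHasEval_C (2 * C) z).mul ((absHasEval_X z).pow 2)
  have hleft := (hone.sub (hMz.mul hG)).pow 2
  have hright := (hG.pow 2).mul (((hone.sub hMz).pow 2).sub hCz)
  rw [hformal] at hleft
  exact hleft.unique hright

lemma ncRadicand_mem_slitPlane (hz : ‖z‖ * (√(2 * ‖C‖) + ‖M‖) < 1) :
    (1 - M * z) ^ 2 - 2 * C * z ^ 2 ∈ Complex.slitPlane := by
  rw [mul_assoc]
  refine one_sub_sq_sub_mem_slitPlane (lt_of_eq_of_lt ?_ hz)
  rw [norm_mul, norm_mul, norm_pow, ← mul_assoc, Real.sqrt_mul (by positivity),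
    Real.sqrt_sq (norm_nonneg z)]
  ring

lemma one_sub_mul_ncGenFun_eq (hz : ‖z‖ * (√(2 * ‖C‖) + ‖M‖) < 1) :
    1 - M * z * ncGenFun C M z =
      ncGenFun C M z * ((1 - M * z) ^ 2 - 2 * C * z ^ 2).sqrt := by
  have hlt : ∀ w ∈ Metric.closedBall (0 : ℂ) ‖z‖, ‖w‖ * (√(2 * ‖C‖) + ‖M‖) < 1 := fun w hw =>
    (mul_le_mul_of_nonneg_right (mem_closedBall_zero_iff.1 hw) (by positivity)).trans_lt hz
  have hG := continuousOn_ncGenFun (norm_nonneg z) hz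
  have hsqrt : ContinuousOn (fun w => ((1 - M * w) ^ 2 - 2 * C * w ^ 2).sqrt)
      (Metric.closedBall 0 ‖z‖) :=
    ContinuousOn.cpow_const (by fun_prop) fun w hw => ncRadicand_mem_slitPlane (hlt w hw)
  have hsq : ∀ w ∈ Metric.closedBall (0 : ℂ) ‖z‖, (1 - M * w * ncGenFun C M w) ^ 2 =
      (ncGenFun C M w * ((1 - M * w) ^ 2 - 2 * C * w ^ 2).sqrt) ^ 2 := fun w hw => by
    rw [mul_pow, complex_sqrt_sq, one_sub_mul_ncGenFun_sq (hlt w hw)]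
  have hne : ∀ w ∈ Metric.closedBall (0 : ℂ) ‖z‖,
      ncGenFun C M w * ((1 - M * w) ^ 2 - 2 * C * w ^ 2).sqrt ≠ 0 := fun w hw h0 => by
    have hG0 := (mul_eq_zero.1 h0).resolve_right fun hs =>
      Complex.slitPlane_ne_zero (ncRadicand_mem_slitPlane (hlt w hw))
        (by rw [← complex_sqrt_sq (_ - _), hs, zero_pow two_ne_zero])
    simpa [hG0] using hsq w hw
  exact (convex_closedBall 0 ‖z‖).isPreconnected.eq_of_sq_eq (by fun_prop) (hG.mul hsqrt) hsq
    (hne _) (Metric.mem_closedBall_self (norm_nonneg z)) (by simp [ncGenFun_zero])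
    (mem_closedBall_zero_iff.2 le_rfl)

lemma ncGenFun_eq (hz : ‖z‖ * (√(2 * ‖C‖) + ‖M‖) < 1) :
    ncGenFun C M z = (((1 - M * z) ^ 2 - 2 * C * z ^ 2).sqrt + M * z)⁻¹ :=
  eq_inv_of_mul_eq_one_left (by linear_combination -one_sub_mul_ncGenFun_eq hz)

end GeneratingFunction

lemma inv_sqrt_add_mul_eq {C M ζ : ℝ} (h0 : 0 < ζ) :
    (√((1 - M * ζ) ^ 2 - 2 * C * ζ ^ 2) + M * ζ)⁻¹ = ζ⁻¹ * (√((ζ⁻¹ - M) ^ 2 - 2 * C) + M)⁻¹ := by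
  have hscale : (1 - M * ζ) ^ 2 - 2 * C * ζ ^ 2 = ((ζ⁻¹ - M) ^ 2 - 2 * C) * ζ ^ 2 := by
    field_simp
  rw [hscale, Real.sqrt_mul' _ (sq_nonneg ζ), Real.sqrt_sq h0.le, ← add_mul, mul_inv_rev]

-- Moving `1 / ζ` under the root makes the radicand equal to `1` at `ζ = 0`, and it then avoids the
-- negative real axis on the whole disc, so the branch asked for is the principal one.
theorem stmt15_general (C M ζ : ℂ) (hζ : ‖ζ‖ * (√(2 * ‖C‖) + ‖M‖) < 1) :
    HasSum
      (fun k : ℕ =>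
        (∑ π ∈ NCge2 k, alphaNC π * C ^ π.card * M ^ (k - 2 * π.card)) * ζ ^ k)
      (((1 - M * ζ) ^ 2 - 2 * C * ζ ^ 2).sqrt + M * ζ)⁻¹ := by
  simpa [← ncGenFun_eq hζ, ← eval_ncPolynomial, ncSeries] using (absHasEval_ncSeries hζ).2

/-- The generating function of `NC_{≥2}` partitions weighted by
`α_π C^{|π|} M^{k-2|π|}`: for `0 < ζ < 1/(M + √(2C))`,
`Σ_{k≥0} (Σ_{π ∈ NC_{≥2}(k)} α_π C^{|π|} M^{k-2|π|}) ζ^k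
  = ζ⁻¹ (√((ζ⁻¹ - M)² - 2C) + M)⁻¹`. -/
theorem stmt15 (C M : ℝ) (hC : 0 ≤ C) (hM : 0 ≤ M)
    (ζ : ℝ) (h0 : 0 < ζ) (hζ : ζ < (M + Real.sqrt (2 * C))⁻¹) :
    HasSum
      (fun k : ℕ =>
        (∑ π ∈ NCge2 k, alphaNC π * C ^ π.card * M ^ (k - 2 * π.card)) * ζ ^ k)
      (ζ⁻¹ * (Real.sqrt ((ζ⁻¹ - M) ^ 2 - 2 * C) + M)⁻¹) := by
  have hden : 0 < M + √(2 * C) := inv_pos.1 (h0.trans hζ)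
  have hlt : ζ * (√(2 * C) + M) < 1 := by
    rwa [← one_div, lt_div_iff₀ hden, add_comm] at hζ
  have hnorm : ‖(ζ : ℂ)‖ * (√(2 * ‖(C : ℂ)‖) + ‖(M : ℂ)‖) < 1 := by
    simpa only [Complex.norm_of_nonneg, h0.le, hC, hM] using hlt
  have hpos : 0 < (1 - M * ζ) ^ 2 - 2 * C * ζ ^ 2 := by
    rw [← Complex.ofReal_mem_slitPlane]
    exact_mod_cast ncRadicand_mem_slitPlane hnorm
  have hsqrt := complex_sqrt_ofReal hpos.le
  have hsum := stmt15_general C M ζ hnorm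
  rw [← inv_sqrt_add_mul_eq h0, ← Complex.hasSum_ofReal]
  push_cast at hsqrt hsum ⊢
  rwa [hsqrt] at hsum
end
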